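/- arXiv:math/0609310 — 4 statements merged into one kernel-verified Lean document; each statement's English description precedes it below -/
import Mathlib

section
/- Let X be a metric space, k ≥ 1, K ⊂ ℝ^k a Borel set, and φ: K → X a Lipschitz map with H^k(φ(K)) > 0. Then there exists a norm ‖·‖ on ℝ^k with the following property: for every ε>0 and every finite set Λ ⊂ ℝ^k there exist r>0 and a map ψ: Λ → X such that (1+ε)^{-1}·r‖a−b‖ ≤ d(ψ(a),ψ(b)) ≤ (1+ε)·r‖a−b‖ for all a,b ∈ Λ. -/
open scoped NNReal ENNReal
open MeasureTheory Filter

universe u v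

namespace SharpIsop

/-- The closed unit disc `D² ⊂ ℝ²`. -/
def D2 : Set (ℝ × ℝ) := {p | p.1 ^ 2 + p.2 ^ 2 ≤ 1}

/-- The length (total variation over `[0,1]`) of a curve `γ : [0,1] → X`. -/
noncomputable def loopLength {X : Type u} [PseudoEMetricSpace X] (γ : ℝ → X) : ℝ :=
  (eVariationOn γ (Set.Icc 0 1)).toReal

/-- A Lipschitz loop in `X`: a Lipschitz map `γ : [0,1] → X` with `γ 0 = γ 1`. -/
def IsLipLoop {X : Type u} [PseudoEMetricSpace X] (γ : ℝ → X) : Prop :=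
  (∃ K : ℝ≥0, LipschitzOnWith K γ (Set.Icc 0 1)) ∧ γ 0 = γ 1

/-- The metric (directional) derivative of `φ : ℝ² → X` at `x` in direction `v`,
defined via a `limsup` so that it is everywhere defined (and agrees a.e. with the
limit when the latter exists). -/
noncomputable def mder {X : Type u} [PseudoMetricSpace X] (φ : ℝ × ℝ → X)
    (x v : ℝ × ℝ) : ℝ :=
  Filter.limsup (fun r : ℝ => dist (φ (x + r • v)) (φ x) / r) (nhdsWithin 0 (Set.Ioi 0))

/-- The Jacobian of a (semi)norm `s` on `ℝ²`:  `π / Leb²({v : s v ≤ 1})` if this set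
has finite measure, `0` otherwise. -/
noncomputable def jac2 (s : ℝ × ℝ → ℝ) : ℝ :=
  if volume {v : ℝ × ℝ | s v ≤ 1} < ⊤ then
    Real.pi / (volume {v : ℝ × ℝ | s v ≤ 1}).toReal
  else 0

/-- The parametrized (Hausdorff) area of a map `φ : D² → X`. -/
noncomputable def lipArea {X : Type u} [PseudoMetricSpace X] (φ : ℝ × ℝ → X) : ℝ :=
  ∫ x in D2, jac2 (mder φ x)

/-- `φ : D² → X` is a singular Lipschitz disc bounding the loop `γ : [0,1] → X`. -/
def BoundsLoop {X : Type u} [PseudoMetricSpace X] (φ : ℝ × ℝ → X) (γ : ℝ → X) : Prop :=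
  (∃ K : ℝ≥0, LipschitzOnWith K φ D2) ∧
    ∀ s ∈ Set.Icc (0:ℝ) 1, φ (Real.cos (2 * Real.pi * s), Real.sin (2 * Real.pi * s)) = γ s

/-- `g : [0, d x y] → X` is a geodesic from `x` to `y`. -/
def IsGeodesicSeg {X : Type u} [MetricSpace X] (x y : X) (g : ℝ → X) : Prop :=
  g 0 = x ∧ g (dist x y) = y ∧
    ∀ s ∈ Set.Icc (0:ℝ) (dist x y), ∀ t ∈ Set.Icc (0:ℝ) (dist x y),
      dist (g s) (g t) = |s - t|

/-- A geodesic metric space: any two points are joined by a geodesic. -/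
def GeodesicSpace (X : Type u) [MetricSpace X] : Prop :=
  ∀ x y : X, ∃ g : ℝ → X, IsGeodesicSeg x y g

/-- Gromov hyperbolicity via δ-slim geodesic triangles. -/
def GromovHyperbolic (X : Type u) [MetricSpace X] : Prop :=
  ∃ δ : ℝ, 0 ≤ δ ∧
    ∀ x y z : X, ∀ gxy gyz gzx : ℝ → X,
      IsGeodesicSeg x y gxy → IsGeodesicSeg y z gyz → IsGeodesicSeg z x gzx →
      ∀ s ∈ Set.Icc (0:ℝ) (dist x y),
        ∃ p ∈ gyz '' Set.Icc (0:ℝ) (dist y z) ∪ gzx '' Set.Icc (0:ℝ) (dist z x),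
          dist (gxy s) p ≤ δ

/-- `L^∞(X)`: the Banach space of bounded real functions on `X` with sup norm. -/
abbrev Linfty (X : Type u) : Type u := lp (fun _ : X => ℝ) ⊤

/-- The Kuratowski embedding `x ↦ d(x,·) − d(x₀,·)` of `X` into `L^∞(X)`. -/
noncomputable def kuratowski (X : Type u) [MetricSpace X] (x₀ : X) (x : X) : Linfty X :=
  ⟨fun y => dist x y - dist x₀ y, memℓp_infty ⟨dist x x₀, by
    rintro t ⟨y, rfl⟩
    simpa [Real.norm_eq_abs] using abs_dist_sub_le x x₀ y⟩⟩

/-- `Y` admits a quadratic isoperimetric inequality for curves (with singular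
Lipschitz discs as fillings). -/
def QuadIsopSpace (Y : Type u) [MetricSpace Y] : Prop :=
  ∃ C > (0:ℝ), ∀ c : ℝ → Y, IsLipLoop c →
    ∃ φ : ℝ × ℝ → Y, BoundsLoop φ c ∧ lipArea φ ≤ C * (loopLength c) ^ 2

/-- `X` admits a disc-thickening with a quadratic isoperimetric inequality. -/
def HasDiscThickeningQII (X : Type u) [MetricSpace X] : Prop :=
  ∃ (X' : Type u) (m : MetricSpace X') (ι : X → X'),
    letI := m
    CompleteSpace X' ∧ Isometry ι ∧
      EMetric.hausdorffEdist (Set.range ι) (Set.univ : Set X') ≠ ⊤ ∧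
      QuadIsopSpace X'

open Metric Topology Asymptotics Module TopologicalSpace
open scoped lp

/-!
Embed `φ(K)` isometrically into `ℓ^∞` and extend to a Lipschitz map `F` on all of `ℝ^k`. At almost
every `x` the map `F` has a metric derivative, the seminorm `v ↦ sup_i |dF_i(x) v|`: it bounds the
difference quotients from below by differentiability of the coordinates and from above, at its
Lebesgue points, by integrating the mollified coordinates along segments. Where the metric
derivative is degenerate, `F` is locally dominated by linear maps of arbitrarily small determinant,
so the set of these points has `H^k`-null image. Since `H^k(φ(K)) > 0`, some density point `x` of
`K` has a metric derivative that is a norm; blowing up at `x`, the points `x + r a` with `a ∈ Λ`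
may be moved into `K` at cost `o(r)`.
-/

lemma exists_lipschitzWith_lp_infty_dist_eq {α X : Type*} [PseudoMetricSpace α]
    [MetricSpace X] {s : Set α} (hs : IsSeparable s) {φ : α → X} {L : ℝ≥0}
    (hφ : LipschitzOnWith L φ s) :
    ∃ F : α → ℓ^∞(ℕ, ℝ), LipschitzWith L F ∧
      ∀ p ∈ s, ∀ q ∈ s, dist (F p) (F q) = dist (φ p) (φ q) := by
  have : SeparableSpace (φ '' s) :=
    (hφ.continuousOn.isSeparable_image hs).separableSpace
  obtain ⟨κ, hκ⟩ := KuratowskiEmbedding.exists_isometric_embedding (φ '' s)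
  let κ' : X → ℓ^∞(ℕ, ℝ) := Function.extend Subtype.val κ 0
  have κ'_dist : ∀ p ∈ s, ∀ q ∈ s, dist (κ' (φ p)) (κ' (φ q)) = dist (φ p) (φ q) := by
    intro p hp q hq
    have κ'_eq (t : φ '' s) : κ' t = κ t := Subtype.val_injective.extend_apply κ 0 t
    exact (congrArg₂ dist (κ'_eq ⟨φ p, p, hp, rfl⟩) (κ'_eq ⟨φ q, q, hq, rfl⟩)).trans
      (hκ.dist_eq _ _)
  obtain ⟨F, hF, hFκ⟩ := LipschitzOnWith.extend_lp_infty (f := κ' ∘ φ) (s := s) (K := L)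
    (LipschitzOnWith.of_dist_le_mul fun p hp q hq =>
      (κ'_dist p hp q hq).trans_le (hφ.dist_le_mul p hp q hq))
  refine ⟨F, hF, fun p hp q hq => ?_⟩
  rw [← hFκ hp, ← hFκ hq]
  exact κ'_dist p hp q hq

lemma exists_lipschitzWith_seminorm {E : Type*} [NormedAddCommGroup E] [NormedSpace ℝ E]
    [FiniteDimensional ℝ E] (N : Seminorm ℝ E) : ∃ C : ℝ≥0, LipschitzWith C N := by
  have hN : Continuous N := continuousOn_univ.1 <| N.convexOn.continuousOn isOpen_univ
  obtain ⟨C, hC, hNC⟩ := N.bound_of_continuous_normedSpace hN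
  exact ⟨⟨C, hC.le⟩, .of_dist_le_mul fun v w =>
    dist_eq_norm v w ▸ (abs_sub_map_le_sub N v w).trans (hNC (v - w))⟩

lemma isLittleO_sub_of_lipschitzWith_of_dense {V W : Type*} [NormedAddCommGroup V]
    [NormedSpace ℝ V] [ProperSpace V] [NormedAddCommGroup W] {e : V → W} {C : ℝ≥0}
    (he : LipschitzWith C e) {z : V} (hz : e z = 0) {D : Set V} (hD : Dense D)
    (hlim : ∀ w ∈ D, (fun r : ℝ => e (z + r • w)) =o[𝓝[>] 0] fun r => r) :
    e =o[𝓝 z] fun p => p - z := by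
  refine isLittleO_iff.2 fun c hc => ?_
  obtain ⟨δ, hδ, hδc⟩ : ∃ δ > 0, (1 + C) * δ = c :=
    ⟨c / (1 + C), by positivity, by field_simp⟩
  obtain ⟨T, hTD, hT, hcover⟩ : ∃ T ⊆ D, T.Finite ∧ sphere (0 : V) 1 ⊆ ⋃ w ∈ T, ball w δ :=
    (isCompact_sphere 0 1).elim_finite_subcover_image (fun _ _ => isOpen_ball) fun u _ =>
      Set.mem_iUnion₂.2 (by simpa using hD.exists_dist_lt u hδ)
  have bound_on_net : ∀ᶠ r : ℝ in 𝓝[>] 0, ∀ w ∈ T, ‖e (z + r • w)‖ ≤ δ * ‖r‖ :=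
    hT.eventually_all.2 fun w hw => (hlim w (hTD hw)).def hδ
  filter_upwards [eventually_nhdsWithin_iff.1
    ((tendsto_norm_sub_self_nhdsNE z).eventually bound_on_net)] with p hp
  rcases eq_or_ne p z with rfl | hpz
  · simp [hz]
  obtain ⟨r, hr, u, hu, rfl⟩ : ∃ r : ℝ, 0 < r ∧ ∃ u ∈ sphere (0 : V) 1, p = z + r • u := by
    have hr : ‖p - z‖ ≠ 0 := norm_ne_zero_iff.2 (sub_ne_zero.2 hpz)
    exact ⟨‖p - z‖, by positivity, ‖p - z‖⁻¹ • (p - z), by simp [norm_smul, hr], by simp [hr]⟩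
  obtain ⟨w, hwT, huw⟩ := Set.mem_iUnion₂.1 (hcover hu)
  have hru : ‖z + r • u - z‖ = r := by
    simp [norm_smul, abs_of_pos hr, mem_sphere_zero_iff_norm.1 hu]
  have hew : ‖e (z + r • w)‖ ≤ δ * r := by
    simpa only [hru, Real.norm_of_nonneg hr.le] using hp hpz w hwT
  have hew' : ‖e (z + r • u) - e (z + r • w)‖ ≤ C * (r * δ) := by
    rw [← dist_eq_norm]
    refine (he.dist_le_mul _ _).trans ?_
    rw [dist_add_left, dist_smul₀, Real.norm_of_nonneg hr.le]
    gcongr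
    exact (mem_ball.1 huw).le
  rw [hru]
  calc ‖e (z + r • u)‖ ≤ ‖e (z + r • w)‖ + ‖e (z + r • u) - e (z + r • w)‖ :=
        norm_le_insert' _ _
    _ ≤ δ * r + C * (r * δ) := add_le_add hew hew'
    _ = c * r := by rw [← hδc]; ring

section MetricDerivative

variable {E Y : Type*} [NormedAddCommGroup E] [NormedSpace ℝ E] [PseudoMetricSpace Y]

/-- `N` is the metric derivative (in the sense of Kirchheim) of `F` at `x`: to first order at `x`,
`F` expands distances by the factor prescribed by the seminorm `N`, for *both* points varying. -/
def HasMetricDerivAt (F : E → Y) (N : Seminorm ℝ E) (x : E) : Prop :=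
  (fun p : E × E => dist (F p.1) (F p.2) - N (p.1 - p.2)) =o[𝓝 (x, x)] fun p => p - (x, x)

namespace HasMetricDerivAt

variable {F : E → Y} {N : Seminorm ℝ E} {x : E}

lemma of_tendsto_dist_div [FiniteDimensional ℝ E] {L : ℝ≥0} (hF : LipschitzWith L F)
    {D : Set E} (hD : Dense D)
    (hlim : ∀ a ∈ D, ∀ b ∈ D, Tendsto (fun r : ℝ => dist (F (x + r • a)) (F (x + r • b)) / r)
      (𝓝[>] 0) (𝓝 (N (a - b)))) : HasMetricDerivAt F N x := by
  obtain ⟨C, hN⟩ := exists_lipschitzWith_seminorm N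
  have lip : LipschitzWith _ fun p : E × E => dist (F p.1) (F p.2) - N (p.1 - p.2) :=
    (LipschitzWith.dist.comp
      ((hF.comp LipschitzWith.prod_fst).prodMk (hF.comp LipschitzWith.prod_snd))).sub
      (hN.comp (LipschitzWith.prod_fst.sub LipschitzWith.prod_snd))
  refine isLittleO_sub_of_lipschitzWith_of_dense lip (by simp) (hD.prod hD) ?_
  rintro ⟨a, b⟩ ⟨ha, hb⟩
  refine (isLittleO_iff_tendsto' ?_).2 ?_
  · filter_upwards [self_mem_nhdsWithin] with r hr hr0 using absurd hr0 (ne_of_gt hr)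
  · refine (tendsto_sub_nhds_zero_iff.2 (hlim a ha b hb)).congr' ?_
    filter_upwards [self_mem_nhdsWithin] with r (hr : 0 < r)
    simp [← smul_sub, map_smul_eq_mul, sub_div, abs_of_pos hr, hr.ne']

lemma eventually_dist_le {N' : E → ℝ} {ε : ℝ} (h : HasMetricDerivAt F N x) (hε : 0 < ε)
    (hN' : ∀ w, N w + ε * ‖w‖ ≤ N' w) : ∀ᶠ y in 𝓝 x, dist (F y) (F x) ≤ N' (y - x) := by
  have diag : Tendsto (fun y => (y, x)) (𝓝 x) (𝓝 (x, x)) := (Continuous.prodMk_left x).tendsto x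
  filter_upwards [(h.comp_tendsto diag).def hε] with y hy
  have : dist (F y) (F x) - N (y - x) ≤ ε * ‖y - x‖ := by
    simpa [Prod.norm_def] using (le_abs_self _).trans hy
  linarith [hN' (y - x)]

lemma tendsto_dist_div [FiniteDimensional ℝ E] (h : HasMetricDerivAt F N x) {p q : ℝ → E}
    {a b : E} (hp : Tendsto (fun r : ℝ => r⁻¹ • (p r - x)) (𝓝[>] 0) (𝓝 a))
    (hq : Tendsto (fun r : ℝ => r⁻¹ • (q r - x)) (𝓝[>] 0) (𝓝 b)) :
    Tendsto (fun r => dist (F (p r)) (F (q r)) / r) (𝓝[>] 0) (𝓝 (N (a - b))) := by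
  have isBigO : (fun r => (p r, q r) - (x, x)) =O[𝓝[>] 0] fun r => r := by
    refine ((isBigO_refl (fun r : ℝ => r) (𝓝[>] 0)).smul
      ((hp.prodMk_nhds hq).isBigO_one ℝ)).congr' ?_ (by simp)
    filter_upwards [self_mem_nhdsWithin] with r hr
    simp [smul_smul, (ne_of_gt hr : r ≠ 0)]
  have tendsto_pair : Tendsto (fun r => (p r, q r)) (𝓝[>] 0) (𝓝 (x, x)) :=
    tendsto_sub_nhds_zero_iff.1 <|
      isBigO.trans_tendsto (tendsto_nhdsWithin_of_tendsto_nhds tendsto_id)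
  have error : Tendsto (fun r => (dist (F (p r)) (F (q r)) - N (p r - q r)) / r)
      (𝓝[>] 0) (𝓝 0) :=
    ((h.comp_tendsto tendsto_pair).trans_isBigO isBigO).tendsto_div_nhds_zero
  obtain ⟨C, hN⟩ := exists_lipschitzWith_seminorm N
  have main := (hN.continuous.tendsto _).comp (hp.sub hq)
  refine (zero_add (N (a - b)) ▸ error.add main).congr' ?_
  filter_upwards [self_mem_nhdsWithin] with r (hr : 0 < r)
  simp only [sub_div, ← smul_sub, sub_sub_sub_cancel_right, Function.comp_apply,
    map_smul_eq_mul, norm_inv, Real.norm_eq_abs, abs_of_pos hr]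
  ring

lemma eventually_bilipschitz [FiniteDimensional ℝ E] (h : HasMetricDerivAt F N x)
    (hN : ∀ v, N v = 0 → v = 0) {Λ : Finset E} {p : E → ℝ → E}
    (hp : ∀ a ∈ Λ, Tendsto (fun r : ℝ => r⁻¹ • (p a r - x)) (𝓝[>] 0) (𝓝 a))
    {ε : ℝ} (hε : 0 < ε) :
    ∀ᶠ r in 𝓝[>] 0, ∀ a ∈ Λ, ∀ b ∈ Λ,
      (1 + ε)⁻¹ * (r * N (a - b)) ≤ dist (F (p a r)) (F (p b r)) ∧
        dist (F (p a r)) (F (p b r)) ≤ (1 + ε) * (r * N (a - b)) := by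
  refine (eventually_all_finset Λ).2 fun a ha => (eventually_all_finset Λ).2 fun b hb => ?_
  rcases eq_or_ne a b with rfl | hab
  · simp
  have pos : 0 < N (a - b) :=
    (apply_nonneg N _).lt_of_ne' fun h0 => hab (sub_eq_zero.1 (hN _ h0))
  have lower : (1 + ε)⁻¹ * N (a - b) < N (a - b) :=
    mul_lt_of_lt_one_left pos (inv_lt_one_of_one_lt₀ (lt_add_of_pos_right 1 hε))
  have upper : N (a - b) < (1 + ε) * N (a - b) :=
    lt_mul_of_one_lt_left pos (lt_add_of_pos_right 1 hε)
  filter_upwards [(h.tendsto_dist_div (hp a ha) (hp b hb)).eventually (Ioo_mem_nhds lower upper),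
    self_mem_nhdsWithin] with r ⟨hr_lower, hr_upper⟩ (hr : 0 < r)
  rw [lt_div_iff₀ hr] at hr_lower
  rw [div_lt_iff₀ hr] at hr_upper
  constructor <;> linarith

end HasMetricDerivAt

end MetricDerivative

section Mollification

variable {E : Type*} [NormedAddCommGroup E] [MeasurableSpace E] [BorelSpace E]
  {f : E → ℝ} {L : ℝ≥0} {ν : Measure E} {ρ : ℝ}

lemma integrable_comp_add_left_of_lipschitzWith [IsFiniteMeasure ν] (hf : LipschitzWith L f)
    (hρ : ∀ᵐ u ∂ν, ‖u‖ ≤ ρ) (c : E) : Integrable (fun u => f (c + u)) ν := by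
  refine .of_bound (hf.continuous.comp (continuous_const_add c)).aestronglyMeasurable
    (‖f c‖ + L * ρ) ?_
  filter_upwards [hρ] with u hu
  calc ‖f (c + u)‖ ≤ ‖f c‖ + dist (f (c + u)) (f c) := norm_le_insert' _ _
    _ ≤ ‖f c‖ + L * dist (c + u) c := by gcongr; exact hf.dist_le_mul _ _
    _ ≤ ‖f c‖ + L * ρ := by rw [dist_self_add_left]; gcongr

lemma abs_integral_comp_add_left_sub_le [IsProbabilityMeasure ν] (hf : LipschitzWith L f)
    (hρ : ∀ᵐ u ∂ν, ‖u‖ ≤ ρ) (c : E) : |∫ u, f (c + u) ∂ν - f c| ≤ L * ρ := by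
  have : ∫ u, f (c + u) ∂ν - f c = ∫ u, (f (c + u) - f c) ∂ν := by
    rw [integral_sub (integrable_comp_add_left_of_lipschitzWith hf hρ c) (integrable_const _),
      integral_const, probReal_univ, one_smul]
  rw [this, ← Real.norm_eq_abs]
  refine (norm_integral_le_of_norm_le_const (C := L * ρ) ?_).trans_eq (by simp)
  filter_upwards [hρ] with u hu
  calc ‖f (c + u) - f c‖ ≤ L * ‖c + u - c‖ := hf.norm_sub_le _ _
    _ ≤ L * ρ := by rw [add_sub_cancel_left]; gcongr

variable [NormedSpace ℝ E] [FiniteDimensional ℝ E] {μ : Measure E} [μ.IsAddHaarMeasure]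

lemma hasDerivAt_integral_comp_add_left [IsFiniteMeasure ν] (hf : LipschitzWith L f)
    (hρ : ∀ᵐ u ∂ν, ‖u‖ ≤ ρ) (hνμ : ν ≪ μ) (p v : E) (s : ℝ) :
    HasDerivAt (fun s : ℝ => ∫ u, f (p + s • v + u) ∂ν)
      (∫ u, fderiv ℝ f (p + s • v + u) v ∂ν) s := by
  refine (hasDerivAt_integral_of_dominated_loc_of_lip (bound := fun _ => L * ‖v‖) univ_mem
    (.of_forall fun t => (integrable_comp_add_left_of_lipschitzWith hf hρ _).aestronglyMeasurable)
    (integrable_comp_add_left_of_lipschitzWith hf hρ _)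
    ((measurable_fderiv_apply_const ℝ f v).comp (measurable_const_add _)).aestronglyMeasurable
    (.of_forall fun u => ?_) (integrable_const _) ?_).2
  · refine .of_dist_le_mul fun a _ b _ => (hf.dist_le_mul _ _).trans_eq ?_
    rw [dist_add_right, dist_add_left, dist_eq_norm, ← sub_smul, norm_smul, dist_eq_norm]
    simp [mul_comm, mul_left_comm]
  · have hdiff : ∀ᵐ u ∂μ, DifferentiableAt ℝ f (p + s • v + u) :=
      (measurePreserving_add_left μ (p + s • v)).quasiMeasurePreserving.ae hf.ae_differentiableAt
    filter_upwards [hνμ.ae_le hdiff] with u hu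
    have hline : HasDerivAt (fun s : ℝ => p + s • v + u) v s := by
      simpa using (((hasDerivAt_id s).smul_const v).const_add p).add_const u
    exact hu.hasFDerivAt.comp_hasDerivAt s hline

lemma abs_sub_le_of_abs_integral_fderiv_le [IsProbabilityMeasure ν] (hf : LipschitzWith L f)
    (hρ : ∀ᵐ u ∂ν, ‖u‖ ≤ ρ) (hνμ : ν ≪ μ) {p v : E} {C : ℝ}
    (hC : ∀ s ∈ Set.Ico (0 : ℝ) 1, |∫ u, fderiv ℝ f (p + s • v + u) v ∂ν| ≤ C) :
    |f (p + v) - f p| ≤ 2 * L * ρ + C := by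
  let g (c : E) : ℝ := ∫ u, f (c + u) ∂ν
  have g_sub : |g (p + v) - g p| ≤ C := by
    simpa using norm_image_sub_le_of_norm_deriv_le_segment_01'
      (fun s _ => (hasDerivAt_integral_comp_add_left hf hρ hνμ p v s).hasDerivWithinAt) hC
  have near (c : E) : |g c - f c| ≤ L * ρ := abs_integral_comp_add_left_sub_le hf hρ c
  calc |f (p + v) - f p| = |(g p - f p) - (g (p + v) - f (p + v)) + (g (p + v) - g p)| := by
        congr 1; ring
    _ ≤ |g p - f p| + |g (p + v) - f (p + v)| + |g (p + v) - g p| :=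
        (abs_add_le _ _).trans (by gcongr; exact abs_sub _ _)
    _ ≤ L * ρ + L * ρ + C := by gcongr <;> apply near
    _ = 2 * L * ρ + C := by ring

end Mollification

section BallAverage

variable {E F : Type*} [NormedAddCommGroup E] [MeasurableSpace E] [BorelSpace E]
  [NormedAddCommGroup F] {μ : Measure E}

lemma setAverage_closedBall_eq_add_left [NormedSpace ℝ F] [μ.IsAddLeftInvariant]
    (m : E → F) (c : E) (ρ : ℝ) :
    ⨍ y in closedBall c ρ, m y ∂μ = ⨍ u in closedBall 0 ρ, m (c + u) ∂μ := by
  have preimage_eq : (c + ·) ⁻¹' closedBall c ρ = closedBall 0 ρ := by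
    rw [preimage_add_closedBall, sub_self]
  rw [setAverage_eq, setAverage_eq, ← preimage_eq, measureReal_def, measureReal_def,
    measure_preimage_add, (measurePreserving_add_left μ c).setIntegral_preimage_emb
      (measurableEmbedding_addLeft c)]

lemma integrableOn_comp_add_left_closedBall [ProperSpace E] [μ.IsAddLeftInvariant] {m : E → F}
    (hm : LocallyIntegrable m μ) (c : E) (ρ : ℝ) :
    IntegrableOn (fun u => m (c + u)) (closedBall 0 ρ) μ := by
  have h := (measurePreserving_add_left μ c).integrableOn_comp_preimage
    (measurableEmbedding_addLeft c) (f := m) (s := closedBall c ρ)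
  rw [preimage_add_closedBall, sub_self] at h
  exact h.2 (hm.integrableOn_isCompact (isCompact_closedBall _ _))

variable [NormedSpace ℝ E] [FiniteDimensional ℝ E] [μ.IsAddHaarMeasure]

lemma abs_sub_le_of_setAverage_closedBall_le {f : E → ℝ} {L : ℝ≥0} (hf : LipschitzWith L f)
    {m : E → ℝ} (hm : LocallyIntegrable m μ) {p v : E}
    (hfm : ∀ y, |fderiv ℝ f y v| ≤ m y) {ρ C : ℝ} (hρ : 0 < ρ)
    (hC : ∀ s ∈ Set.Ico (0 : ℝ) 1, ⨍ y in closedBall (p + s • v) ρ, m y ∂μ ≤ C) :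
    |f (p + v) - f p| ≤ 2 * L * ρ + C := by
  let ν : Measure E := (μ (closedBall 0 ρ))⁻¹ • μ.restrict (closedBall 0 ρ)
  have : IsProbabilityMeasure ν :=
    ProbabilityTheory.cond_isProbabilityMeasure_of_finite (measure_closedBall_pos μ 0 hρ).ne'
      measure_closedBall_lt_top.ne
  have hνμ : ν ≪ μ := ProbabilityTheory.cond_absolutelyContinuous
  have hνρ : ∀ᵐ u ∂ν, ‖u‖ ≤ ρ := by
    filter_upwards [ProbabilityTheory.ae_cond_mem measurableSet_closedBall] with u hu
      using mem_closedBall_zero_iff.1 hu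
  refine abs_sub_le_of_abs_integral_fderiv_le hf hνρ hνμ fun s hs => ?_
  have hm_int : Integrable (fun u => m (p + s • v + u)) ν :=
    (integrableOn_comp_add_left_closedBall hm _ ρ).integrable.smul_measure
      (ENNReal.inv_ne_top.2 (measure_closedBall_pos μ 0 hρ).ne')
  rw [← Real.norm_eq_abs]
  calc ‖∫ u, fderiv ℝ f (p + s • v + u) v ∂ν‖ ≤ ∫ u, m (p + s • v + u) ∂ν :=
        norm_integral_le_of_norm_le hm_int (.of_forall fun u => hfm _)
    _ = ⨍ y in closedBall (p + s • v) ρ, m y ∂μ := by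
        rw [setAverage_closedBall_eq_add_left, setAverage_eq']
    _ ≤ C := hC s hs

lemma ae_tendsto_setAverage_closedBall_add_smul [NormedSpace ℝ F] [CompleteSpace F]
    {m : E → F} (hm : LocallyIntegrable m μ) :
    ∀ᵐ x ∂μ, ∀ T : Set E, Bornology.IsBounded T → ∀ δ > 0,
      Tendsto (fun q : ℝ × E => ⨍ y in closedBall (x + q.1 • q.2) (q.1 * δ), m y ∂μ)
        (𝓝[>] 0 ×ˢ 𝓟 T) (𝓝 (m x)) := by
  have lebesgue : ∀ᵐ x ∂μ, ∀ n : ℕ, ∀ {ι : Type _} {l : Filter ι} (w : ι → E) (δ : ι → ℝ)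
      (_ : Tendsto δ l (𝓝[>] 0)) (_ : ∀ᶠ j in l, x ∈ closedBall (w j) (n * δ j)),
      Tendsto (fun j => ⨍ y in closedBall (w j) (δ j), m y ∂μ) l (𝓝 (m x)) :=
    ae_all_iff.2 fun n => IsUnifLocDoublingMeasure.ae_tendsto_average μ hm n
  filter_upwards [lebesgue] with x hx T hT δ hδ
  obtain ⟨R, hR⟩ := hT.exists_norm_le
  obtain ⟨n, hn⟩ := exists_nat_ge (R / δ)
  refine hx n _ _ ?_ ?_
  · refine Tendsto.comp (g := fun r : ℝ => r * δ) ?_ tendsto_fst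
    refine tendsto_nhdsWithin_iff.2 ⟨tendsto_nhdsWithin_of_tendsto_nhds <|
      (continuous_mul_const δ).tendsto' 0 0 (zero_mul δ), ?_⟩
    filter_upwards [self_mem_nhdsWithin] with r hr using mul_pos hr hδ
  · refine eventually_prod_principal_iff.2 ?_
    filter_upwards [self_mem_nhdsWithin] with r hr z hz
    rw [mem_closedBall, dist_self_add_right, norm_smul, Real.norm_of_nonneg (le_of_lt hr)]
    rw [div_le_iff₀ hδ] at hn
    calc r * ‖z‖ ≤ r * (n * δ) := mul_le_mul_of_nonneg_left ((hR z hz).trans hn) (le_of_lt hr)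
      _ = n * (r * δ) := by ring

end BallAverage

section CoordDerivSeminorm

variable {E ι : Type*} [NormedAddCommGroup E] [NormedSpace ℝ E]

/-- For `F : E → ℓ^∞` the seminorm `v ↦ sup_i |dF_i(x) v|`, the metric derivative of a Lipschitz
map `F` at almost every `x`. It is junk unless the derivatives are uniformly bounded. -/
noncomputable def coordDerivSeminorm (F : E → ℓ^∞(ι, ℝ)) (x : E) : Seminorm ℝ E :=
  ⨆ i, (normSeminorm ℝ ℝ).comp (fderiv ℝ (fun y => F y i) x).toLinearMap

namespace coordDerivSeminorm

variable {F : E → ℓ^∞(ι, ℝ)} {L : ℝ≥0}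

lemma abs_fderiv_coord_le (hF : LipschitzWith L F) (x v : E) (i : ι) :
    |fderiv ℝ (fun y => F y i) x v| ≤ L * ‖v‖ :=
  ContinuousLinearMap.le_of_opNorm_le _
    (norm_fderiv_le_of_lipschitz ℝ ((LipschitzWith.coordinate L).1 hF i)) v

lemma bddAbove_abs_fderiv_coord (hF : LipschitzWith L F) (x v : E) :
    BddAbove (Set.range fun i => |fderiv ℝ (fun y => F y i) x v|) :=
  ⟨L * ‖v‖, Set.forall_mem_range.2 fun i => abs_fderiv_coord_le hF x v i⟩

lemma apply_eq_iSup (hF : LipschitzWith L F) (x v : E) :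
    coordDerivSeminorm F x v = ⨆ i, |fderiv ℝ (fun y => F y i) x v| :=
  Seminorm.iSup_apply <| Seminorm.bddAbove_range_iff.2 fun v => bddAbove_abs_fderiv_coord hF x v

lemma abs_fderiv_coord_le_apply (hF : LipschitzWith L F) (x v : E) (i : ι) :
    |fderiv ℝ (fun y => F y i) x v| ≤ coordDerivSeminorm F x v :=
  (le_ciSup (bddAbove_abs_fderiv_coord hF x v) i).trans_eq (apply_eq_iSup hF x v).symm

lemma apply_le (hF : LipschitzWith L F) (x v : E) : coordDerivSeminorm F x v ≤ L * ‖v‖ := by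
  rw [apply_eq_iSup hF]
  exact Real.iSup_le (abs_fderiv_coord_le hF x v) (by positivity)

lemma locallyIntegrable [MeasurableSpace E] [BorelSpace E] {μ : Measure E}
    [IsLocallyFiniteMeasure μ] [Countable ι] (hF : LipschitzWith L F) (v : E) :
    LocallyIntegrable (fun x => coordDerivSeminorm F x v) μ := by
  have measurable : Measurable fun x => coordDerivSeminorm F x v := by
    simp_rw [apply_eq_iSup hF]
    exact .iSup fun i => (measurable_fderiv_apply_const ℝ _ v).abs
  refine (memLp_top_of_bound measurable.aestronglyMeasurable (L * ‖v‖) ?_).locallyIntegrable le_top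
  exact .of_forall fun x => by simpa [abs_of_nonneg] using apply_le hF x v

lemma eventually_lt_dist_div [Nonempty ι] (hF : LipschitzWith L F) {x : E}
    (hdiff : ∀ i, DifferentiableAt ℝ (fun y => F y i) x) {a b : E} {c : ℝ}
    (hc : c < coordDerivSeminorm F x (a - b)) :
    ∀ᶠ r : ℝ in 𝓝[>] 0, c < dist (F (x + r • a)) (F (x + r • b)) / r := by
  rw [apply_eq_iSup hF] at hc
  obtain ⟨i, hi⟩ := exists_lt_of_lt_ciSup hc
  have slope (w : E) := ((hdiff i).hasFDerivAt.hasLineDerivAt w).tendsto_slope_zero_right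
  have diff_quot := ((slope a).sub (slope b)).abs
  rw [← map_sub] at diff_quot
  filter_upwards [diff_quot.eventually_const_lt hi, self_mem_nhdsWithin] with r hr hr0
  rw [← smul_sub, sub_sub_sub_cancel_right, smul_eq_mul, abs_mul, abs_inv, abs_of_pos hr0,
    inv_mul_eq_div] at hr
  refine hr.trans_le ?_
  gcongr
  · exact le_of_lt hr0
  rw [dist_eq_norm]
  exact lp.norm_apply_le_norm ENNReal.top_ne_zero (F (x + r • a) - F (x + r • b)) i

variable [FiniteDimensional ℝ E] [MeasurableSpace E] [BorelSpace E] {μ : Measure E}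
  [μ.IsAddHaarMeasure] [Countable ι]

lemma dist_le_of_setAverage_closedBall_le (hF : LipschitzWith L F) {p v : E} {ρ C : ℝ}
    (hρ : 0 < ρ) (hC0 : 0 ≤ C) (hC : ∀ s ∈ Set.Ico (0 : ℝ) 1,
      ⨍ y in closedBall (p + s • v) ρ, coordDerivSeminorm F y v ∂μ ≤ C) :
    dist (F (p + v)) (F p) ≤ 2 * L * ρ + C := by
  rw [dist_eq_norm]
  exact lp.norm_le_of_forall_le (by positivity) fun i =>
    abs_sub_le_of_setAverage_closedBall_le ((LipschitzWith.coordinate L).1 hF i)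
      (locallyIntegrable hF v) (fun y => abs_fderiv_coord_le_apply hF y v i) hρ hC

variable (μ) in
lemma ae_eventually_dist_div_lt (hF : LipschitzWith L F) (a b : E) :
    ∀ᵐ x ∂μ, ∀ c > coordDerivSeminorm F x (a - b),
      ∀ᶠ r : ℝ in 𝓝[>] 0, dist (F (x + r • a)) (F (x + r • b)) / r < c := by
  filter_upwards [ae_tendsto_setAverage_closedBall_add_smul (locallyIntegrable hF (a - b))]
    with x hx c hc
  obtain ⟨c', hxc', hc'c⟩ := exists_between hc
  have hc' : 0 ≤ c' := (apply_nonneg _ _).trans hxc'.le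
  obtain ⟨δ, hδ, hδc⟩ : ∃ δ > 0, 2 * L * δ + c' < c := by
    have hlim : Tendsto (fun δ : ℝ => 2 * L * δ + c') (𝓝[>] 0) (𝓝 c') :=
      tendsto_nhdsWithin_of_tendsto_nhds <| Continuous.tendsto' (by fun_prop) _ _ (by simp)
    obtain ⟨δ, hδc, hδ⟩ := ((hlim.eventually_lt_const hc'c).and self_mem_nhdsWithin).exists
    exact ⟨δ, hδ, hδc⟩
  have bounded : Bornology.IsBounded (segment ℝ b a) :=
    convexHull_pair (𝕜 := ℝ) b a ▸ isBounded_convexHull.2 (Set.toFinite _).isBounded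
  have averages := eventually_prod_principal_iff.1
    ((hx _ bounded δ hδ).eventually_le_const hxc')
  filter_upwards [averages, self_mem_nhdsWithin] with r hr (hr0 : 0 < r)
  have dist_le : dist (F (x + r • b + r • (a - b))) (F (x + r • b)) ≤
      2 * L * (r * δ) + r * c' := by
    refine dist_le_of_setAverage_closedBall_le (μ := μ) hF (by positivity) (by positivity) ?_
    intro s hs
    have hs' : b + s • (a - b) ∈ segment ℝ b a :=
      segment_eq_image' ℝ b a ▸ Set.mem_image_of_mem _ (Set.Ico_subset_Icc_self hs)
    have center : x + r • b + s • r • (a - b) = x + r • (b + s • (a - b)) := by module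
    simp only [center, map_smul_eq_mul, Real.norm_of_nonneg hr0.le, average_eq,
      integral_const_mul, smul_eq_mul, mul_left_comm _ r]
    gcongr
    simpa [average_eq] using hr _ hs'
  rw [div_lt_iff₀ hr0]
  calc dist (F (x + r • a)) (F (x + r • b)) ≤ 2 * L * (r * δ) + r * c' := by
        convert dist_le using 3; module
    _ = (2 * L * δ + c') * r := by ring
    _ < c * r := by gcongr

variable (μ) in
lemma ae_tendsto_dist_div [Nonempty ι] (hF : LipschitzWith L F) (a b : E) :
    ∀ᵐ x ∂μ, Tendsto (fun r : ℝ => dist (F (x + r • a)) (F (x + r • b)) / r) (𝓝[>] 0)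
      (𝓝 (coordDerivSeminorm F x (a - b))) := by
  filter_upwards [ae_eventually_dist_div_lt μ hF a b, ae_all_iff.2 fun i =>
    ((LipschitzWith.coordinate L).1 hF i).ae_differentiableAt (μ := μ)] with x upper hdiff
  exact tendsto_order.2 ⟨fun c hc => eventually_lt_dist_div hF hdiff hc, upper⟩

variable (μ) in
lemma ae_hasMetricDerivAt [Nonempty ι] (hF : LipschitzWith L F) :
    ∀ᵐ x ∂μ, HasMetricDerivAt F (coordDerivSeminorm F x) x := by
  obtain ⟨D, hD, hD_dense⟩ := exists_countable_dense E
  filter_upwards [(ae_ball_iff hD).2 fun a _ => (ae_ball_iff hD).2 fun b _ =>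
    ae_tendsto_dist_div μ hF a b] with x hx
  exact .of_tendsto_dist_div hF hD_dense hx

end coordDerivSeminorm

end CoordDerivSeminorm

lemma exists_projection_of_seminorm_eq_zero {E : Type*} [NormedAddCommGroup E] [NormedSpace ℝ E]
    [FiniteDimensional ℝ E] {N : Seminorm ℝ E} {v : E} (hv : v ≠ 0) (hNv : N v = 0) :
    ∃ Q : E →L[ℝ] E, Q.det = 0 ∧ (∀ w, Q (Q w) = Q w) ∧ ∃ C : ℝ≥0, ∀ w, N w ≤ C * ‖Q w‖ := by
  obtain ⟨C, hC⟩ := exists_lipschitzWith_seminorm N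
  obtain ⟨ℓ, hℓ⟩ := SeparatingDual.exists_eq_one (R := ℝ) hv
  let Q : E →L[ℝ] E := .id ℝ E - ℓ.smulRight v
  refine ⟨Q, ?_, fun w => by simp [Q, hℓ], C, fun w => ?_⟩
  · exact LinearMap.det_eq_zero_iff_ker_ne_bot.2 <|
      (Submodule.ne_bot_iff _).2 ⟨v, by simp [Q, hℓ], hv⟩
  · calc N w = N (Q w + ℓ w • v) := by simp [Q]
      _ ≤ N (Q w) + N (ℓ w • v) := map_add_le_add N _ _
      _ = N (Q w) := by rw [map_smul_eq_mul, hNv, mul_zero, add_zero]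
      _ ≤ C * ‖Q w‖ := (le_abs_self _).trans (hC.norm_le_mul (map_zero N) (Q w))

lemma exists_det_lt_of_seminorm_eq_zero {E : Type*} [NormedAddCommGroup E] [NormedSpace ℝ E]
    [FiniteDimensional ℝ E] {N : Seminorm ℝ E} {v : E} (hv : v ≠ 0) (hNv : N v = 0)
    {δ : ℝ} (hδ : 0 < δ) :
    ∃ A : E →L[ℝ] E, |A.det| < δ ∧ ∃ ε > 0, ∀ w, N w + ε * ‖w‖ ≤ ‖A w‖ := by
  obtain ⟨Q, det_Q, Q_idem, C, hNQ⟩ := exists_projection_of_seminorm_eq_zero hv hNv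
  let A (η : ℝ) : E →L[ℝ] E := (C * ‖Q‖ + 1 + ‖Q‖) • (Q + η • .id ℝ E)
  have det_A : Tendsto (fun η => |(A η).det|) (𝓝[>] 0) (𝓝 0) := by
    have hcont : Continuous fun η => |(A η).det| :=
      (ContinuousLinearMap.continuous_det.comp (by fun_prop)).abs
    refine (hcont.tendsto' 0 0 ?_).mono_left nhdsWithin_le_nhds
    simp [A, ContinuousLinearMap.det, det_Q]
  obtain ⟨η, hη, hη0⟩ := ((det_A.eventually_lt_const hδ).and self_mem_nhdsWithin).exists
  refine ⟨A η, hη, η, hη0, fun w => ?_⟩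
  set t := ‖Q w + η • w‖ with ht
  have norm_Q_le : ‖Q w‖ ≤ ‖Q‖ * t := by
    have hη1 : 1 ≤ 1 + η := le_add_of_nonneg_right (le_of_lt hη0)
    calc ‖Q w‖ ≤ (1 + η) * ‖Q w‖ := le_mul_of_one_le_left (norm_nonneg _) hη1
      _ = ‖Q (Q w + η • w)‖ := by
        rw [map_add, map_smul, Q_idem, ← one_smul ℝ (Q w), smul_smul, ← add_smul, norm_smul,
          norm_smul, mul_one, norm_one, one_mul, Real.norm_of_nonneg (by positivity)]
      _ ≤ ‖Q‖ * t := Q.le_opNorm _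
  have norm_le : η * ‖w‖ ≤ t + ‖Q w‖ := by
    simpa [norm_smul, abs_of_pos hη0] using norm_sub_le (Q w + η • w) (Q w)
  calc N w + η * ‖w‖ ≤ C * (‖Q‖ * t) + (t + ‖Q‖ * t) := by
        gcongr
        · exact (hNQ w).trans (by gcongr)
        · exact norm_le.trans (by gcongr)
    _ = (C * ‖Q‖ + 1 + ‖Q‖) * t := by ring
    _ = ‖A η w‖ := by
      rw [ht, smul_apply, norm_smul, Real.norm_of_nonneg (by positivity)]
      rfl

lemma isOpen_setOf_seminorm_add_le_norm {E F : Type*} [NormedAddCommGroup E] [NormedSpace ℝ E]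
    [NormedAddCommGroup F] [NormedSpace ℝ F] (N : E → ℝ) :
    IsOpen {A : E →L[ℝ] F | ∃ ε > 0, ∀ w, N w + ε * ‖w‖ ≤ ‖A w‖} := by
  refine Metric.isOpen_iff.2 fun A ⟨ε, hε, hA⟩ => ⟨ε / 2, half_pos hε, fun A' hA' => ?_⟩
  refine ⟨ε / 2, half_pos hε, fun w => ?_⟩
  have : ‖A w‖ - ‖A' w‖ ≤ ε / 2 * ‖w‖ :=
    calc ‖A w‖ - ‖A' w‖ ≤ ‖(A - A') w‖ := norm_sub_norm_le _ _
      _ ≤ ε / 2 * ‖w‖ := (A - A').le_of_opNorm_le (mem_ball_iff_norm'.1 hA').le w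
  linarith [hA w]

lemma hausdorffMeasure_image_le_of_edist_le {α X Y : Type*} [EMetricSpace X] [EMetricSpace Y]
    [MeasurableSpace X] [BorelSpace X] [MeasurableSpace Y] [BorelSpace Y] {f : α → X} {g : α → Y}
    {s : Set α} (h : ∀ x ∈ s, ∀ y ∈ s, edist (f x) (f y) ≤ edist (g x) (g y)) {d : ℝ}
    (hd : 0 ≤ d) : μH[d] (f '' s) ≤ μH[d] (g '' s) := by
  rcases s.eq_empty_or_nonempty with rfl | ⟨x₀, -⟩
  · simp
  have : Nonempty α := ⟨x₀⟩
  have mem_inv {y : Y} (hy : y ∈ g '' s) : Function.invFunOn g s y ∈ s :=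
    Function.invFunOn_mem hy
  have apply_inv {y : Y} (hy : y ∈ g '' s) : g (Function.invFunOn g s y) = y :=
    Function.invFunOn_eq hy
  have image_eq : f '' s = (f ∘ Function.invFunOn g s) '' (g '' s) := by
    rw [Set.image_image]
    refine Set.image_congr fun x hx => edist_le_zero.1 ?_
    have hgx := Set.mem_image_of_mem g hx
    exact (h x hx _ (mem_inv hgx)).trans_eq (by rw [apply_inv hgx, edist_self])
  have lip : LipschitzOnWith 1 (f ∘ Function.invFunOn g s) (g '' s) := fun y hy z hz => by
    simpa [apply_inv hy, apply_inv hz] using h _ (mem_inv hy) _ (mem_inv hz)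
  rw [image_eq]
  simpa using lip.hausdorffMeasure_image_le hd

lemma measure_image_le_mul_of_countable_cover {α β ι : Type*} [MeasurableSpace α]
    [MeasurableSpace β] [Countable ι] {μ : Measure α} {ν : Measure β} {F : α → β} {U : ι → Set α}
    (hU : ∀ i, MeasurableSet (U i)) {δ : ℝ≥0∞} (h : ∀ i, ∀ T ⊆ U i, ν (F '' T) ≤ δ * μ T)
    {S : Set α} (hS : S ⊆ ⋃ i, U i) : ν (F '' S) ≤ δ * μ S := by
  rcases isEmpty_or_nonempty ι with _ | _
  · simp [Set.subset_empty_iff.1 (Set.iUnion_of_empty U ▸ hS)]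
  obtain ⟨e, he⟩ := exists_surjective_nat ι
  let V := disjointed (U ∘ e)
  have V_iUnion : ⋃ n, V n = ⋃ i, U i := (iUnion_disjointed (f := U ∘ e)).trans (he.iUnion_comp U)
  have V_meas (n : ℕ) : MeasurableSet (V n) := MeasurableSet.disjointed (fun n => hU (e n)) n
  have S_eq : S = ⋃ n, V n ∩ S := by rw [← Set.iUnion_inter, V_iUnion, Set.inter_eq_right.2 hS]
  calc ν (F '' S) = ν (⋃ n, F '' (V n ∩ S)) := by rw [← Set.image_iUnion, ← S_eq]
    _ ≤ ∑' n, ν (F '' (V n ∩ S)) := measure_iUnion_le _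
    _ ≤ ∑' n, δ * μ (V n ∩ S) := ENNReal.tsum_le_tsum fun n =>
        h (e n) _ (Set.inter_subset_left.trans (disjointed_le (U ∘ e) n))
    _ = δ * ∑' n, μ.restrict S (V n) := by
        simp only [ENNReal.tsum_mul_left, Measure.restrict_apply (V_meas _)]
    _ = δ * μ S := by
        rw [← measure_iUnion (disjoint_disjointed _) V_meas, V_iUnion,
          Measure.restrict_apply (.iUnion hU), Set.inter_eq_right.2 hS]

section HausdorffMeasure

variable {E Y : Type*} [NormedAddCommGroup E] [NormedSpace ℝ E] [FiniteDimensional ℝ E]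
  [MeasurableSpace E] [BorelSpace E] [MetricSpace Y] [MeasurableSpace Y] [BorelSpace Y]
  {F : E → Y}

lemma hausdorffMeasure_image_le_of_dist_le_norm {A : E →L[ℝ] E} {T : Set E}
    (h : ∀ x ∈ T, ∀ y ∈ T, dist (F y) (F x) ≤ ‖A (y - x)‖) :
    μH[finrank ℝ E] (F '' T) ≤ ENNReal.ofReal |A.det| * μH[finrank ℝ E] T := by
  rw [← Measure.addHaar_image_continuousLinearMap]
  refine hausdorffMeasure_image_le_of_edist_le (fun x hx y hy => ?_) (Nat.cast_nonneg _)
  rw [edist_dist, edist_dist, dist_eq_norm (A x), ← map_sub]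
  exact ENNReal.ofReal_le_ofReal (h y hy x hx)

lemma hausdorffMeasure_image_le_of_eventually_dist_le_norm (hF : Continuous F)
    {D : Set (E →L[ℝ] E)} (hD : D.Countable) {δ : ℝ} {S : Set E}
    (h : ∀ x ∈ S, ∃ A ∈ D, |A.det| ≤ δ ∧ ∀ᶠ y in 𝓝 x, dist (F y) (F x) ≤ ‖A (y - x)‖) :
    μH[finrank ℝ E] (F '' S) ≤ ENNReal.ofReal δ * μH[finrank ℝ E] S := by
  let D' := {A ∈ D | |A.det| ≤ δ}
  have : Countable D' := (hD.mono (Set.sep_subset _ _)).to_subtype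
  let U (i : D' × countableBasis E) : Set E :=
    i.2 ∩ ⋂ y ∈ (i.2 : Set E), {x | dist (F y) (F x) ≤ ‖i.1.1 (y - x)‖}
  refine measure_image_le_mul_of_countable_cover (U := U) (fun i => ?_) (fun i T hT => ?_)
    fun x hx => ?_
  · exact (isOpen_of_mem_countableBasis i.2.2).measurableSet.inter <| IsClosed.measurableSet <|
      isClosed_biInter fun y _ => isClosed_le (by fun_prop) (by fun_prop)
  · refine (hausdorffMeasure_image_le_of_dist_le_norm (A := i.1.1) fun x hx y hy => ?_).trans ?_
    · exact Set.mem_iInter₂.1 (hT hx).2 y (hT hy).1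
    · gcongr
      exact i.1.2.2
  · obtain ⟨A, hAD, hA, hAx⟩ := h x hx
    obtain ⟨B, hB, hxB, hBA⟩ := (isBasis_countableBasis E).mem_nhds_iff.1 hAx
    exact Set.mem_iUnion.2 ⟨(⟨A, hAD, hA⟩, ⟨B, hB⟩), hxB, Set.mem_iInter₂.2 fun y hy => hBA hy⟩

lemma hausdorffMeasure_image_eq_zero_of_degenerate (hF : Continuous F) {S : Set E}
    (hS : ∀ x ∈ S, ∃ N, HasMetricDerivAt F N x ∧ ∃ v ≠ 0, N v = 0) :
    μH[finrank ℝ E] (F '' S) = 0 := by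
  wlog bounded : Bornology.IsBounded S generalizing S
  · have S_eq : S = ⋃ n : ℕ, S ∩ ball 0 n := by
      rw [← Set.inter_iUnion, iUnion_ball_nat, Set.inter_univ]
    rw [S_eq, Set.image_iUnion, measure_iUnion_null_iff]
    exact fun n => this (fun x hx => hS x hx.1) (isBounded_ball.subset Set.inter_subset_right)
  obtain ⟨D, hD, hD_dense⟩ := exists_countable_dense (E →L[ℝ] E)
  have le_mul : ∀ δ > 0, μH[finrank ℝ E] (F '' S) ≤ ENNReal.ofReal δ * μH[finrank ℝ E] S := by
    refine fun δ hδ => hausdorffMeasure_image_le_of_eventually_dist_le_norm hF hD fun x hx => ?_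
    obtain ⟨N, hN, v, hv, hNv⟩ := hS x hx
    have isOpen : IsOpen {A : E →L[ℝ] E | |A.det| < δ ∧ ∃ ε > 0, ∀ w, N w + ε * ‖w‖ ≤ ‖A w‖} :=
      (isOpen_lt ContinuousLinearMap.continuous_det.abs continuous_const).inter
        (isOpen_setOf_seminorm_add_le_norm N)
    obtain ⟨A, hAD, hA, ε, hε, hNA⟩ := hD_dense.exists_mem_open isOpen
      (exists_det_lt_of_seminorm_eq_zero hv hNv hδ)
    exact ⟨A, hAD, hA.le, hN.eventually_dist_le hε hNA⟩
  have hlim : Tendsto (fun δ : ℝ => ENNReal.ofReal δ * μH[finrank ℝ E] S) (𝓝[>] 0) (𝓝 0) := by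
    have : Tendsto ENNReal.ofReal (𝓝[>] 0) (𝓝 0) :=
      tendsto_nhdsWithin_of_tendsto_nhds (ENNReal.continuous_ofReal.tendsto' 0 0 (by simp))
    simpa using ENNReal.Tendsto.mul_const this (.inr bounded.measure_lt_top.ne)
  exact le_zero_iff.1 <| ge_of_tendsto hlim <| eventually_mem_nhdsWithin.mono le_mul

lemma frequently_hasMetricDerivAt_norm {L : ℝ≥0} (hF : LipschitzWith L F)
    (hdiff : ∀ᵐ x ∂μH[finrank ℝ E], ∃ N, HasMetricDerivAt F N x) {K : Set E}
    (hpos : 0 < μH[finrank ℝ E] (F '' K)) :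
    ∃ᵐ x ∂μH[finrank ℝ E],
      x ∈ K ∧ ∃ N : Seminorm ℝ E, HasMetricDerivAt F N x ∧ ∀ v, N v = 0 → v = 0 := by
  intro hK
  let S : Set E := {x | ∃ N, HasMetricDerivAt F N x ∧ ∃ v ≠ 0, N v = 0}
  have null_diff : μH[finrank ℝ E] (K \ S) = 0 := by
    refine measure_mono_null (fun x hx => ?_) (ae_iff.1 (hdiff.and hK))
    rintro ⟨⟨N, hN⟩, hxK⟩
    exact hxK ⟨hx.1, N, hN, fun v hNv => by_contra fun hv => hx.2 ⟨N, hN, v, hv, hNv⟩⟩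
  have null_image_diff : μH[finrank ℝ E] (F '' (K \ S)) = 0 := by
    simpa [null_diff] using hF.hausdorffMeasure_image_le (Nat.cast_nonneg (finrank ℝ E)) (K \ S)
  have null_image : μH[finrank ℝ E] (F '' S) = 0 :=
    hausdorffMeasure_image_eq_zero_of_degenerate hF.continuous fun _ hx => hx
  refine hpos.ne' (measure_mono_null ?_ (measure_union_null null_image_diff null_image))
  rw [← Set.image_union, Set.sdiff_union_self]
  exact Set.image_mono Set.subset_union_left

end HausdorffMeasure

lemma ae_isLittleO_infDist {E : Type*} [NormedAddCommGroup E] [NormedSpace ℝ E]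
    [FiniteDimensional ℝ E] [MeasurableSpace E] [BorelSpace E] (μ : Measure E) [μ.IsAddHaarMeasure]
    (K : Set E) :
    ∀ᵐ x ∂μ, x ∈ K → ∀ a : E, (fun r : ℝ => infDist (x + r • a) K) =o[𝓝[>] 0] fun r => r := by
  have density : ∀ᵐ x ∂μ, x ∈ K → ∀ n : ℕ, ∀ (w : ℝ → E) (δ : ℝ → ℝ),
      Tendsto δ (𝓝[>] 0) (𝓝[>] 0) → (∀ᶠ r in 𝓝[>] 0, x ∈ closedBall (w r) (n * δ r)) →
      Tendsto (fun r => μ (K ∩ closedBall (w r) (δ r)) / μ (closedBall (w r) (δ r)))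
        (𝓝[>] 0) (𝓝 1) := by
    refine ae_imp_of_ae_restrict <| ae_all_iff.2 fun n => ?_
    filter_upwards [IsUnifLocDoublingMeasure.ae_tendsto_measure_inter_div μ K n] with x hx w δ
      using hx w δ
  filter_upwards [density] with x hx hxK a
  refine isLittleO_iff.2 fun η hη => ?_
  obtain ⟨n, hn⟩ := exists_nat_ge (‖a‖ / η)
  have hlim := hx hxK n (fun r => x + r • a) (fun r => η * r)
    (tendsto_nhdsWithin_iff.2 ⟨?_, ?_⟩) ?_
  · filter_upwards [hlim.eventually_const_lt zero_lt_one, self_mem_nhdsWithin] with r hr hr0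
    obtain ⟨p, hpK, hp⟩ : (K ∩ closedBall (x + r • a) (η * r)).Nonempty := by
      by_contra! hempty
      simp [hempty] at hr
    rw [Real.norm_of_nonneg infDist_nonneg, Real.norm_of_nonneg (le_of_lt hr0)]
    exact (infDist_le_dist_of_mem hpK).trans (mem_closedBall'.1 hp)
  · exact (tendsto_id.const_mul η).mono_left nhdsWithin_le_nhds |>.trans (by simp)
  · filter_upwards [self_mem_nhdsWithin] with r hr using mul_pos hη hr
  · filter_upwards [self_mem_nhdsWithin] with r hr
    rw [div_le_iff₀ hη] at hn
    rw [mem_closedBall, dist_self_add_right, norm_smul, Real.norm_of_nonneg (le_of_lt hr)]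
    linarith [mul_le_mul_of_nonneg_left hn (le_of_lt hr)]

lemma exists_forall_mem_tendsto_inv_smul_sub {E : Type*} [NormedAddCommGroup E] [NormedSpace ℝ E]
    {K : Set E} (hK : K.Nonempty) {x a : E}
    (h : (fun r : ℝ => infDist (x + r • a) K) =o[𝓝[>] 0] fun r => r) :
    ∃ p : ℝ → E, (∀ r, p r ∈ K) ∧ Tendsto (fun r => r⁻¹ • (p r - x)) (𝓝[>] 0) (𝓝 a) := by
  have exists_near (r : ℝ) :
      ∃ y ∈ K, 0 < r → dist y (x + r • a) < infDist (x + r • a) K + r ^ 2 := by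
    rcases le_or_gt r 0 with hr | hr
    · exact hK.imp fun y hy => ⟨hy, fun hr' => absurd hr' hr.not_gt⟩
    · obtain ⟨y, hy, hxy⟩ := (infDist_lt_iff hK).1
        (lt_add_of_pos_right (infDist (x + r • a) K) (pow_pos hr 2))
      exact ⟨y, hy, fun _ => dist_comm y _ ▸ hxy⟩
  choose p hpK hp using exists_near
  refine ⟨p, hpK, tendsto_iff_dist_tendsto_zero.2 ?_⟩
  have hlim : Tendsto (fun r => infDist (x + r • a) K / r + r) (𝓝[>] 0) (𝓝 0) := by
    simpa using h.tendsto_div_nhds_zero.add (tendsto_nhdsWithin_of_tendsto_nhds tendsto_id)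
  refine squeeze_zero' (.of_forall fun _ => dist_nonneg) ?_ hlim
  filter_upwards [self_mem_nhdsWithin] with r (hr : 0 < r)
  have dist_eq : dist (r⁻¹ • (p r - x)) a = dist (p r) (x + r • a) / r := by
    calc dist (r⁻¹ • (p r - x)) a = ‖r⁻¹ • (p r - (x + r • a))‖ := by
          rw [dist_eq_norm, ← sub_sub, smul_sub _ _ (r • a), inv_smul_smul₀ hr.ne']
      _ = dist (p r) (x + r • a) / r := by
          rw [norm_smul, norm_inv, Real.norm_of_nonneg hr.le, dist_eq_norm, inv_mul_eq_div]
  calc dist (r⁻¹ • (p r - x)) a = dist (p r) (x + r • a) / r := dist_eq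
    _ ≤ (infDist (x + r • a) K + r ^ 2) / r := by gcongr; exact (hp r hr).le
    _ = infDist (x + r • a) K / r + r := by field_simp

theorem kirchheim_bilip_finite_set_general {E X : Type*} [NormedAddCommGroup E] [NormedSpace ℝ E]
    [FiniteDimensional ℝ E] [MeasurableSpace E] [BorelSpace E] [MetricSpace X] [MeasurableSpace X]
    [BorelSpace X] {K : Set E} {φ : E → X} {L : ℝ≥0} (hφ : LipschitzOnWith L φ K)
    (hpos : 0 < μH[finrank ℝ E] (φ '' K)) :
    ∃ N : Seminorm ℝ E, (∀ v, N v = 0 → v = 0) ∧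
      ∀ ε > (0 : ℝ), ∀ Λ : Finset E, ∃ r > (0 : ℝ), ∃ ψ : E → X, ∀ a ∈ Λ, ∀ b ∈ Λ,
        (1 + ε)⁻¹ * (r * N (a - b)) ≤ dist (ψ a) (ψ b) ∧
          dist (ψ a) (ψ b) ≤ (1 + ε) * (r * N (a - b)) := by
  borelize ↥ℓ^∞(ℕ, ℝ)
  obtain ⟨F, hF, dist_F⟩ := exists_lipschitzWith_lp_infty_dist_eq (.of_separableSpace K) hφ
  have hposF : 0 < μH[finrank ℝ E] (F '' K) :=
    hpos.trans_le <| hausdorffMeasure_image_le_of_edist_le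
      (fun x hx y hy => by simp only [edist_dist, dist_F x hx y hy, le_refl]) (Nat.cast_nonneg _)
  have metricDeriv : ∀ᵐ x ∂μH[finrank ℝ E], ∃ N, HasMetricDerivAt F N x :=
    (coordDerivSeminorm.ae_hasMetricDerivAt _ hF).mono fun _ hx => ⟨_, hx⟩
  obtain ⟨x, ⟨hxK, N, hFN, hN⟩, dense⟩ :=
    ((frequently_hasMetricDerivAt_norm hF metricDeriv hposF).and_eventually
      (ae_isLittleO_infDist μH[finrank ℝ E] K)).exists
  choose p hpK hp using fun a => exists_forall_mem_tendsto_inv_smul_sub ⟨x, hxK⟩ (dense hxK a)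
  refine ⟨N, hN, fun ε hε Λ => ?_⟩
  obtain ⟨r, bilip, hr⟩ := ((hFN.eventually_bilipschitz hN (Λ := Λ) (fun a _ => hp a) hε).and
    self_mem_nhdsWithin).exists
  refine ⟨r, hr, fun a => φ (p a r), fun a ha b hb => ?_⟩
  rw [← dist_F _ (hpK a r) _ (hpK b r)]
  exact bilip a ha b hb

/-- Theorem 2.1, Kirchheim / Korevaar–Schoen: if `φ : K → X` is a
Lipschitz map on a Borel set `K ⊂ ℝ^k` (`k ≥ 1`) with `H^k(φ(K)) > 0`, then there is
a norm `N` on `ℝ^k` such that for every `ε > 0` and every finite set `Λ ⊂ ℝ^k` there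
are `r > 0` and a map `ψ : Λ → X` which is `(1+ε)`-biLipschitz from `(Λ, r·N)`
to `X`. -/
theorem kirchheim_bilip_finite_set {X : Type u} [MetricSpace X]
    [MeasurableSpace X] [BorelSpace X]
    (k : ℕ) (hk : 1 ≤ k) (K : Set (Fin k → ℝ)) (hK : MeasurableSet K)
    (φ : (Fin k → ℝ) → X) (L : ℝ≥0) (hφ : LipschitzOnWith L φ K)
    (hpos : 0 < μH[k] (φ '' K)) :
    ∃ N : (Fin k → ℝ) → ℝ,
      (∀ v, 0 ≤ N v) ∧ (∀ v, N v = 0 → v = 0) ∧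
      (∀ (c : ℝ) (v), N (c • v) = |c| * N v) ∧
      (∀ v w, N (v + w) ≤ N v + N w) ∧
      ∀ ε > (0:ℝ), ∀ Λ : Finset (Fin k → ℝ),
        ∃ r > (0:ℝ), ∃ ψ : (Fin k → ℝ) → X, ∀ a ∈ Λ, ∀ b ∈ Λ,
          (1 + ε)⁻¹ * (r * N (a - b)) ≤ dist (ψ a) (ψ b) ∧
          dist (ψ a) (ψ b) ≤ (1 + ε) * (r * N (a - b)) := by
  obtain ⟨N, hN, hbilip⟩ := kirchheim_bilip_finite_set_general hφ (by simpa using hpos)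
  exact ⟨N, apply_nonneg N, hN, map_smul_eq_mul N, map_add_le_add N, hbilip⟩

end SharpIsop
end

section
/- Let X be a geodesic metric space, r > 0 and L ≥ 0. Let β:[0,L]→X be an isometric embedding (a unit-speed geodesic) and α:[0,1]→X a Lipschitz curve with α(0)=β(0) and α(1)=β(L). Let t_z ∈ [0,L], set z := β(t_z), and assume d(α(s), z) ≥ r for all s ∈ [0,1] (this forces r ≤ t_z and r ≤ L−t_z). Set z' := β(t_z − r/2), N := { β(t) : t ∈ [0,L], |t − t_z| ≤ r/2 }, f(x) := max{0, 1 − (2/r)·dist(x, N)} and π(x) := r^{-1}·d(x, z'). Let γ:[0,1]→X be the concatenated loop γ(s) = β(2sL) for s ∈ [0,1/2] and γ(s) = α(2−2s) for s ∈ [1/2,1] (so γ(0)=γ(1)=β(0)). Then f is Lipschitz with constant 2/r, π is Lipschitz with constant 1/r, and ∫₀¹ f(γ(s))·(π∘γ)'(s) ds ≥ 1, where (π∘γ)' denotes the almost-everywhere defined derivative of the Lipschitz function π∘γ. -/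
open scoped NNReal ENNReal
open MeasureTheory Filter

universe u v

namespace SharpIsop

/-!
The cutoff `f` vanishes along `α`. Along the geodesic, `π ∘ β` has derivative
`r⁻¹ * sign (u - (t_z - r / 2))`, so after substitution the integral is `r⁻¹` times that of
`ψ u * sign (u - (t_z - r / 2))` with `ψ = f ∘ β`. As `β` is isometric, `ψ` is the cutoff function
of the interval `[t_z - r / 2, t_z + r / 2]` in `ℝ`, hence symmetric about `t_z`: its two ramps
contribute with opposite signs and cancel, while the plateau of height `1` and width `r` gives the
value `r⁻¹ * r = 1`.
-/

open Metric Set Topology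
open SignType (sign)

/-- `φ` is an isometric embedding of the subset `S`; for `S = [0, L] ⊆ ℝ` this says that `φ` is a
unit-speed geodesic. -/
def IsometricOn {X Y : Type*} [PseudoMetricSpace X] [PseudoMetricSpace Y] (φ : X → Y)
    (S : Set X) : Prop :=
  ∀ x ∈ S, ∀ y ∈ S, dist (φ x) (φ y) = dist x y

/-- The cutoff function of slope `K` around `N`: it is `1` on `N` and decays linearly with the
distance to `N`, vanishing from distance `K⁻¹` on. -/
noncomputable def cutoff {X : Type*} [PseudoMetricSpace X] (K : ℝ) (N : Set X) (x : X) : ℝ :=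
  max 0 (1 - K * infDist x N)

/-- The loop on `[0, 1]` that runs through `β : [0, L] → X` on `[0, 1/2]` and then backwards through
`α : [0, 1] → X` on `[1/2, 1]`. -/
noncomputable def concatLoop {X : Type*} (β α : ℝ → X) (L s : ℝ) : X :=
  if s ≤ 1 / 2 then β (2 * s * L) else α (2 - 2 * s)

section Lipschitz

variable {X : Type*} [PseudoMetricSpace X] {K : ℝ}

theorem lipschitzWith_const_mul {Y : Type*} [PseudoEMetricSpace Y] {C : ℝ≥0} {g : Y → ℝ}
    (hK : 0 ≤ K) (hg : LipschitzWith C g) : LipschitzWith (K.toNNReal * C) fun y => K * g y := by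
  rw [Real.toNNReal_eq_nnnorm_of_nonneg hK]
  exact (lipschitzWith_smul K).comp hg

theorem lipschitzWith_const_mul_dist (hK : 0 ≤ K) (z : X) :
    LipschitzWith K.toNNReal fun x => K * dist x z := by
  simpa only [mul_one] using lipschitzWith_const_mul hK (LipschitzWith.dist_left z)

theorem lipschitzWith_cutoff (hK : 0 ≤ K) (N : Set X) : LipschitzWith K.toNNReal (cutoff K N) := by
  have hdist := lipschitzWith_const_mul hK (lipschitz_infDist_pt N)
  rw [mul_one] at hdist
  simpa only [zero_add] using! ((LipschitzWith.const 1).sub hdist).const_max 0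

end Lipschitz

section Cutoff

variable {X Y : Type*} [PseudoMetricSpace X] [PseudoMetricSpace Y] {K ρ : ℝ} {N S : Set X} {x z : X}

theorem cutoff_of_mem (hx : x ∈ N) : cutoff K N x = 1 := by
  simp [cutoff, infDist_zero_of_mem hx]

theorem cutoff_of_le_dist (hK : 0 < K) (hN : N.Nonempty) (hNz : N ⊆ closedBall z ρ)
    (hx : ρ + K⁻¹ ≤ dist x z) : cutoff K N x = 0 := by
  have hinf : K⁻¹ ≤ infDist x N := (le_infDist hN).2 fun y hy => by
    linarith [dist_triangle x y z, mem_closedBall.1 (hNz hy)]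
  have hslope : 1 ≤ K * infDist x N := (inv_le_iff_one_le_mul₀' hK).1 hinf
  exact max_eq_left (by linarith)

theorem IsometricOn.infDist_image {φ : X → Y} (hφ : IsometricOn φ S) (hN : N ⊆ S) (hx : x ∈ S) :
    infDist (φ x) (φ '' N) = infDist x N := by
  have hedist : ∀ y ∈ N, edist (φ x) (φ y) = edist x y := fun y hy => by
    rw [edist_dist, edist_dist, hφ x hx y (hN hy)]
  simp only [infDist, infEDist, iInf_image]
  rw [biInf_congr hedist]

theorem IsometricOn.cutoff_image {φ : X → Y} (hφ : IsometricOn φ S) (hN : N ⊆ S) (hx : x ∈ S) :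
    cutoff K (φ '' N) (φ x) = cutoff K N x := by
  rw [cutoff, cutoff, hφ.infDist_image hN hx]

theorem cutoff_closedBall_apply_of_fixed (e : X ≃ᵢ X) (he : e z = z) (x : X) :
    cutoff K (closedBall z ρ) (e x) = cutoff K (closedBall z ρ) x := by
  have hball : e '' closedBall z ρ = closedBall z ρ := by rw [e.image_closedBall, he]
  have hiso : IsometricOn e univ := fun x _ y _ => e.dist_eq x y
  simpa only [hball] using hiso.cutoff_image (K := K) (subset_univ (closedBall z ρ)) (mem_univ x)

end Cutoff

section Real

variable {K c h : ℝ}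

theorem support_cutoff_closedBall_subset (hK : 0 < K) (hh : 0 ≤ h) :
    Function.support (cutoff K (closedBall c h)) ⊆ ball c (h + K⁻¹) := by
  intro u hu
  by_contra hball
  exact hu (cutoff_of_le_dist hK (nonempty_closedBall.2 hh) Subset.rfl (not_lt.1 hball))

theorem integrable_cutoff_closedBall (hK : 0 < K) (hh : 0 ≤ h) :
    Integrable (cutoff K (closedBall c h)) := by
  refine (lipschitzWith_cutoff hK.le _).continuous.integrable_of_hasCompactSupport ?_
  exact .of_support_subset_isCompact (isCompact_closedBall c (h + K⁻¹))
    ((support_cutoff_closedBall_subset hK hh).trans ball_subset_closedBall)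

theorem integrable_mul_sign {Ω : Type*} [MeasurableSpace Ω] {μ : Measure Ω} {ψ σ : Ω → ℝ}
    (hψ : Integrable ψ μ) (hσ : Measurable σ) : Integrable (fun u => ψ u * sign (σ u)) μ := by
  have hsign : Measurable fun u => (sign (σ u) : ℝ) := by
    simpa only [Function.comp_def, deriv_abs] using (measurable_deriv (|·| : ℝ → ℝ)).comp hσ
  refine hψ.mul_bdd (c := 1) hsign.aestronglyMeasurable (.of_forall fun u => ?_)
  cases sign (σ u) <;> simp

theorem sign_sub_add_sign_sub {a b u : ℝ} (hab : a ≤ b) (hua : u ≠ a) (hub : u ≠ b) :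
    (sign (u - a) + sign (b - u) : ℝ) = (Ioc a b).indicator 2 u := by
  rcases lt_or_gt_of_ne hua with hua | hua
  · have hout : u ∉ Ioc a b := fun hu => hua.not_gt hu.1
    simp [hout, sign_neg (sub_neg.2 hua), sign_pos (sub_pos.2 (hua.trans_le hab))]
  rcases lt_or_gt_of_ne hub with hub | hub
  · have hin : u ∈ Ioc a b := ⟨hua, hub.le⟩
    simp [hin, sign_pos (sub_pos.2 hua), sign_pos (sub_pos.2 hub), one_add_one_eq_two]
  · have hout : u ∉ Ioc a b := fun hu => hub.not_ge hu.2
    simp [hout, sign_pos (sub_pos.2 hua), sign_neg (sub_neg.2 hub)]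

-- Averaging the integrand with its reflection in `c` replaces the sign by the indicator function
-- of `[c - h, c + h]`.
theorem integral_mul_sign_of_reflect {ψ : ℝ → ℝ} (hψ : Integrable ψ) (hh : 0 ≤ h)
    (hsymm : ∀ u, ψ (2 * c - u) = ψ u) :
    ∫ u, ψ u * sign (u - (c - h)) = ∫ u in (c - h)..(c + h), ψ u := by
  have hreflect : ∫ u, ψ u * sign (u - (c - h)) = ∫ u, ψ u * sign (c + h - u) := by
    rw [← integral_sub_left_eq_self _ volume (2 * c)]
    refine integral_congr_ae (.of_forall fun u => ?_)
    simp only [hsymm]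
    ring_nf
  have hsum : (fun u => ψ u * sign (u - (c - h)) + ψ u * sign (c + h - u)) =ᵐ[volume]
      (Ioc (c - h) (c + h)).indicator fun u => ψ u * 2 := by
    filter_upwards [volume.ae_ne (c - h), volume.ae_ne (c + h)] with u hleft hright
    rw [← mul_add, sign_sub_add_sign_sub (by linarith) hleft hright, indicator_mul_right]
    rfl
  have hdouble : (∫ u, ψ u * sign (u - (c - h))) + ∫ u, ψ u * sign (c + h - u) =
      (∫ u in (c - h)..(c + h), ψ u) * 2 := by
    rw [← integral_add (integrable_mul_sign hψ (by fun_prop))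
        (integrable_mul_sign hψ (by fun_prop)), integral_congr_ae hsum,
      integral_indicator measurableSet_Ioc, integral_mul_const,
      intervalIntegral.integral_of_le (by linarith)]
  linarith

theorem integral_cutoff_closedBall_mul_sign (hK : 0 < K) (hh : 0 ≤ h) :
    ∫ u, cutoff K (closedBall c h) u * sign (u - (c - h)) = 2 * h := by
  have hone : ∫ u in (c - h)..(c + h), cutoff K (closedBall c h) u =
      ∫ _ in (c - h)..(c + h), (1 : ℝ) := by
    refine intervalIntegral.integral_congr fun u hu => cutoff_of_mem ?_
    rwa [Real.closedBall_eq_Icc, ← uIcc_of_le (by linarith)]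
  have hsymm : ∀ u, cutoff K (closedBall c h) (2 * c - u) = cutoff K (closedBall c h) u :=
    cutoff_closedBall_apply_of_fixed (IsometryEquiv.subLeft (2 * c)) (by simp [two_mul])
  rw [integral_mul_sign_of_reflect (integrable_cutoff_closedBall hK hh) hh hsymm, hone,
    intervalIntegral.integral_const, smul_eq_mul]
  ring

end Real

section Geodesic

variable {X : Type*} [PseudoMetricSpace X] {β : ℝ → X} {L : ℝ}

theorem IsometricOn.deriv_dist {S : Set ℝ} {a u : ℝ} (hβ : IsometricOn β S) (ha : a ∈ S)
    (hu : S ∈ 𝓝 u) : deriv (fun t => dist (β t) (β a)) u = sign (u - a) := by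
  have hdist : (fun t => dist (β t) (β a)) =ᶠ[𝓝 u] fun t => |t - a| := by
    filter_upwards [hu] with t ht using hβ t ht a ha
  rw [hdist.deriv_eq, deriv_comp_sub_const (f := (|·|)), deriv_abs]

theorem IsometricOn.integral_cutoff_mul_deriv_dist {K c h : ℝ} (hβ : IsometricOn β (Icc 0 L))
    (hK : 0 < K) (hh : 0 ≤ h) (hball : closedBall c (h + K⁻¹) ⊆ Icc 0 L) :
    ∫ u in 0..L, cutoff K (β '' closedBall c h) (β u) *
      deriv (fun t => dist (β t) (β (c - h))) u = 2 * h := by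
  have hsub : closedBall c h ⊆ Icc 0 L :=
    (closedBall_subset_closedBall (by linarith [inv_pos.2 hK])).trans hball
  have hleft : c - h ∈ Icc 0 L := hsub (by simp [abs_of_nonneg hh])
  have hsupp : Function.support (cutoff K (closedBall c h)) ⊆ Ioc 0 L :=
    calc Function.support (cutoff K (closedBall c h))
      _ ⊆ ball c (h + K⁻¹) := support_cutoff_closedBall_subset hK hh
      _ ⊆ interior (Icc 0 L) :=
        interior_maximal (ball_subset_closedBall.trans hball) isOpen_ball
      _ ⊆ Ioc 0 L := interior_Icc.subset.trans Ioo_subset_Ioc_self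
  calc ∫ u in 0..L, cutoff K (β '' closedBall c h) (β u) *
        deriv (fun t => dist (β t) (β (c - h))) u
    _ = ∫ u in 0..L, cutoff K (closedBall c h) u * sign (u - (c - h)) := by
      refine intervalIntegral.integral_congr_Ioo_of_le (hleft.1.trans hleft.2) fun u hu => ?_
      simp only [hβ.cutoff_image hsub (Ioo_subset_Icc_self hu),
        hβ.deriv_dist hleft (Icc_mem_nhds hu.1 hu.2)]
    _ = ∫ u, cutoff K (closedBall c h) u * sign (u - (c - h)) :=
      intervalIntegral.integral_eq_integral_of_support_subset
        ((Function.support_mul_subset_left _ _).trans hsupp)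
    _ = 2 * h := integral_cutoff_closedBall_mul_sign hK hh

theorem IsometricOn.closedBall_subset_Icc {r t : ℝ} (hβ : IsometricOn β (Icc 0 L))
    (ht : t ∈ Icc 0 L) (h0 : r ≤ dist (β 0) (β t)) (h1 : r ≤ dist (β L) (β t)) :
    closedBall t r ⊆ Icc 0 L := by
  have hL : 0 ≤ L := ht.1.trans ht.2
  rw [hβ 0 (left_mem_Icc.2 hL) t ht, dist_comm, Real.dist_0_eq_abs, abs_of_nonneg ht.1] at h0
  rw [hβ L (right_mem_Icc.2 hL) t ht, Real.dist_eq, abs_of_nonneg (sub_nonneg.2 ht.2)] at h1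
  rw [Real.closedBall_eq_Icc]
  exact Icc_subset_Icc (by linarith) (by linarith)

end Geodesic

section ConcatLoop

variable {X : Type*} {β α : ℝ → X} {L s : ℝ}

theorem concatLoop_of_le (hs : s ≤ 1 / 2) : concatLoop β α L s = β (2 * L * s) := by
  rw [concatLoop, if_pos hs, mul_right_comm]

theorem concatLoop_of_lt (hs : 1 / 2 < s) : concatLoop β α L s = α (2 - 2 * s) :=
  if_neg hs.not_ge

theorem deriv_comp_concatLoop (q : X → ℝ) (hs : s < 1 / 2) :
    deriv (fun t => q (concatLoop β α L t)) s = 2 * L * deriv (fun t => q (β t)) (2 * L * s) := by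
  have hq : (fun t => q (concatLoop β α L t)) =ᶠ[𝓝 s] fun t => q (β (2 * L * t)) := by
    filter_upwards [Iio_mem_nhds hs] with t ht
    rw [concatLoop_of_le (mem_Iio.1 ht).le]
  rw [hq.deriv_eq, deriv_comp_mul_left (2 * L) (fun t => q (β t)), smul_eq_mul]

-- Where the loop runs through `α` the factor `deriv` may be a junk value, but `g` vanishes there.
theorem integral_mul_deriv_concatLoop {g q : X → ℝ} (hg : ∀ s ∈ Icc (0 : ℝ) 1, g (α s) = 0) :
    ∫ s in (0 : ℝ)..1, g (concatLoop β α L s) * deriv (fun t => q (concatLoop β α L t)) s =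
      ∫ u in 0..L, g (β u) * deriv (fun t => q (β t)) u := by
  have hzero : ∀ s ∈ Ioc (0 : ℝ) 1 \ Ioc 0 (1 / 2),
      g (concatLoop β α L s) * deriv (fun t => q (concatLoop β α L t)) s = 0 := by
    rintro s ⟨hs, hs'⟩
    have hhalf : 1 / 2 < s := not_le.1 fun h => hs' ⟨hs.1, h⟩
    rw [concatLoop_of_lt hhalf, hg _ ⟨by linarith [hs.2], by linarith⟩, zero_mul]
  calc ∫ s in (0 : ℝ)..1, g (concatLoop β α L s) * deriv (fun t => q (concatLoop β α L t)) s
    _ = ∫ s in (0 : ℝ)..(1 / 2),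
          g (concatLoop β α L s) * deriv (fun t => q (concatLoop β α L t)) s := by
      rw [intervalIntegral.integral_of_le zero_le_one,
        intervalIntegral.integral_of_le (by norm_num)]
      exact setIntegral_eq_of_subset_of_forall_sdiff_eq_zero measurableSet_Ioc
        (Ioc_subset_Ioc_right (by norm_num)) hzero
    _ = ∫ s in (0 : ℝ)..(1 / 2),
          2 * L * (g (β (2 * L * s)) * deriv (fun t => q (β t)) (2 * L * s)) := by
      refine intervalIntegral.integral_congr_Ioo_of_le (by norm_num) fun s hs => ?_
      simp only [concatLoop_of_le hs.2.le, deriv_comp_concatLoop q hs.2]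
      ring
    _ = ∫ u in (2 * L * 0)..(2 * L * (1 / 2)), g (β u) * deriv (fun t => q (β t)) u := by
      rw [intervalIntegral.integral_const_mul]
      exact intervalIntegral.smul_integral_comp_mul_left
        (fun u => g (β u) * deriv (fun t => q (β t)) u) (2 * L)
    _ = ∫ u in 0..L, g (β u) * deriv (fun t => q (β t)) u := by
      congr 1 <;> ring

end ConcatLoop

theorem nondegenerate_loop_from_detour_general {X : Type*} [PseudoMetricSpace X] {r L tz : ℝ}
    (hr : 0 < r) {β α : ℝ → X} (hβ : IsometricOn β (Icc 0 L)) (hα0 : α 0 = β 0) (hα1 : α 1 = β L)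
    (htz : tz ∈ Icc 0 L) (hfar : ∀ s ∈ Icc (0 : ℝ) 1, r ≤ dist (α s) (β tz)) :
    let f := cutoff (2 / r) (β '' (Icc 0 L ∩ closedBall tz (r / 2)))
    let p := fun x => r⁻¹ * dist x (β (tz - r / 2))
    let γ := concatLoop β α L
    LipschitzWith (Real.toNNReal (2 / r)) f ∧ LipschitzWith (Real.toNNReal (1 / r)) p ∧
      ∫ s in (0 : ℝ)..1, f (γ s) * deriv (fun t => p (γ t)) s = 1 := by
  have hradius : r / 2 + (2 / r)⁻¹ = r := by rw [inv_div, add_halves]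
  have hball : closedBall tz r ⊆ Icc 0 L := hβ.closedBall_subset_Icc htz
    (hα0 ▸ hfar 0 (left_mem_Icc.2 zero_le_one)) (hα1 ▸ hfar 1 (right_mem_Icc.2 zero_le_one))
  have hsub : closedBall tz (r / 2) ⊆ Icc 0 L :=
    (closedBall_subset_closedBall (half_le_self hr.le)).trans hball
  rw [inter_eq_right.2 hsub]
  intro f p γ
  refine ⟨lipschitzWith_cutoff (by positivity) _, ?_, ?_⟩
  · rw [one_div]
    exact lipschitzWith_const_mul_dist (by positivity) _
  · have hN : β '' closedBall tz (r / 2) ⊆ closedBall (β tz) (r / 2) := by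
      rintro _ ⟨t, ht, rfl⟩
      exact (hβ t (hsub ht) tz htz).trans_le ht
    have hfα : ∀ s ∈ Icc (0 : ℝ) 1, f (α s) = 0 := fun s hs =>
      cutoff_of_le_dist (by positivity) ((nonempty_closedBall.2 (by positivity)).image β)
        hN (by rw [hradius]; exact hfar s hs)
    rw [integral_mul_deriv_concatLoop hfα]
    simp only [f, p, deriv_const_mul_field, mul_left_comm _ r⁻¹,
      intervalIntegral.integral_const_mul]
    rw [hβ.integral_cutoff_mul_deriv_dist (by positivity) (by positivity) (by rwa [hradius])]
    field_simp

/-- key computation in the proof of Lemma 4.2: for a unit-speed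
geodesic `β : [0,L] → X`, a Lipschitz curve `α` with the same endpoints avoiding the
ball `B(z, r)` around `z = β(t_z)`, the functions `f(x) = max{0, 1 − (2/r)·dist(x,N)}`
(with `N` the part of `β` at parameter-distance ≤ r/2 from `t_z`) and
`π(x) = r⁻¹·d(x, β(t_z − r/2))` are `2/r`- resp. `1/r`-Lipschitz, and the
concatenated loop `γ` of `β` and the reversal of `α` satisfies
`∫₀¹ f(γ(s))·(π∘γ)'(s) ds ≥ 1`. -/
theorem nondegenerate_loop_from_detour {X : Type u} [MetricSpace X]
    (hX : GeodesicSpace X) (r L : ℝ) (hr : 0 < r) (hL : 0 ≤ L)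
    (β α : ℝ → X)
    (hβ : ∀ s ∈ Set.Icc (0:ℝ) L, ∀ t ∈ Set.Icc (0:ℝ) L, dist (β s) (β t) = |s - t|)
    (hα : ∃ K : ℝ≥0, LipschitzOnWith K α (Set.Icc 0 1))
    (hα0 : α 0 = β 0) (hα1 : α 1 = β L)
    (tz : ℝ) (htz : tz ∈ Set.Icc (0:ℝ) L)
    (hfar : ∀ s ∈ Set.Icc (0:ℝ) 1, r ≤ dist (α s) (β tz)) :
    ∀ (N : Set X) (f p : X → ℝ) (γ : ℝ → X),
      N = β '' {t | t ∈ Set.Icc (0:ℝ) L ∧ |t - tz| ≤ r / 2} →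
      f = (fun x => max 0 (1 - (2 / r) * Metric.infDist x N)) →
      p = (fun x => r⁻¹ * dist x (β (tz - r / 2))) →
      γ = (fun s => if s ≤ 1 / 2 then β (2 * s * L) else α (2 - 2 * s)) →
      LipschitzWith (Real.toNNReal (2 / r)) f ∧
      LipschitzWith (Real.toNNReal (1 / r)) p ∧
      1 ≤ ∫ s in (0:ℝ)..1, f (γ s) * deriv (fun t => p (γ t)) s := by
  rintro _ _ _ _ rfl rfl rfl rfl
  obtain ⟨hf, hp, hI⟩ := nondegenerate_loop_from_detour_general hr hβ hα0 hα1 htz hfar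
  exact ⟨hf, hp, hI.ge⟩

end SharpIsop
end

section
/- Let X be a metric space, ε'>0 and δ>0, and let K₁,…,Kₙ ⊂ ℝ be compact sets and φ_i: K_i → X maps that are (1+ε')-biLipschitz onto their images, i.e. |s−t|/(1+ε') ≤ d(φ_i(s),φ_i(t)) ≤ (1+ε')|s−t| for all s,t ∈ K_i. Assume the images are pairwise disjoint with dist(φ_i(K_i), φ_j(K_j)) ≥ 2(1+ε')δ/ε' whenever i≠j. Set Ω := ∪_i φ_i(K_i), let {z₁,…,z_m} ⊂ Ω be δ-dense in Ω (every point of Ω lies within distance δ of some z_k), and for each i let η̄_i: X → ℝ be a (1+ε')-Lipschitz extension of φ_i^{-1}: φ_i(K_i) → ℝ. Define Ψ: X → ℓ^∞_{n+m} by Ψ(x) := (η̄₁(x),…,η̄ₙ(x), d(x,z₁),…,d(x,z_m)). Then Ψ is (1+ε')-Lipschitz on X, and for all x,x' ∈ Ω one has ‖Ψ(x)−Ψ(x')‖_∞ ≥ d(x,x')/(1+ε'); in particular Ψ restricted to Ω is (1+ε')-biLipschitz. -/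
open scoped NNReal ENNReal
open MeasureTheory Filter

universe u v

namespace SharpIsop

/-!
Two points on the same piece `φᵢ(Kᵢ)` are told apart by the coordinate `η̄ᵢ`, which inverts the
`(1 + ε')`-Lipschitz map `φᵢ` there. For `x, x'` on different pieces take a net point `z` with
`d(x, z) ≤ δ`: the coordinate `d(·, z)` differs by at least `d(x, x') - 2 δ`, and the pieces are so
far apart that `2 δ` is at most the fraction `ε' / (1 + ε')` of `d(x, x')`.
-/

section AugmentedFrechet

variable {X ι κ : Type*} [PseudoMetricSpace X]

/-- The map `Ψ`: the Fréchet map `x ↦ (d(x, z k))ₖ` of the points `z k`, augmented by the coordinate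
functions `η i`. For finite `ι` and `κ` the target is `ℓ^∞`, since Mathlib's product metric is the
sup metric. -/
def augmentedFrechet (η : ι → X → ℝ) (z : κ → X) (x : X) : ι ⊕ κ → ℝ :=
  Sum.elim (fun i => η i x) (fun k => dist x (z k))

theorem lipschitzWith_augmentedFrechet [Fintype ι] [Fintype κ] {C : ℝ≥0} (hC : 1 ≤ C)
    {η : ι → X → ℝ} (hη : ∀ i, LipschitzWith C (η i)) (z : κ → X) :
    LipschitzWith C (augmentedFrechet η z) := by
  intro x y
  refine edist_pi_le_iff.2 ?_
  rintro (i | k)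
  · exact hη i x y
  · exact ((LipschitzWith.dist_left (z k)).weaken hC) x y

theorem dist_le_mul_dist_of_leftInvOn {Y : Type*} [PseudoMetricSpace Y] {C : ℝ≥0} {φ : Y → X}
    {η : X → Y} {K : Set Y} (hφ : LipschitzOnWith C φ K) (hη : Set.LeftInvOn η φ K) {x x' : X}
    (hx : x ∈ φ '' K) (hx' : x' ∈ φ '' K) : dist x x' ≤ C * dist (η x) (η x') := by
  obtain ⟨s, hs, rfl⟩ := hx
  obtain ⟨t, ht, rfl⟩ := hx'
  rw [hη hs, hη ht]
  exact hφ.dist_le_mul s hs t ht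

theorem dist_sub_two_mul_dist_le (x x' p : X) :
    dist x x' - 2 * dist x p ≤ dist (dist x p) (dist x' p) :=
  calc
    dist x x' - 2 * dist x p ≤ dist x' p - dist x p := by
      linarith [dist_triangle_right x x' p]
    _ ≤ dist (dist x p) (dist x' p) := by
      rw [Real.dist_eq, abs_sub_comm]
      exact le_abs_self (dist x' p - dist x p)

theorem dist_div_le_dist_dist_of_separated {ε δ : ℝ} (hε : 0 < ε) {x x' p : X}
    (hp : dist x p ≤ δ) (hsep : 2 * (1 + ε) * δ / ε ≤ dist x x') :
    dist x x' / (1 + ε) ≤ dist (dist x p) (dist x' p) := by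
  have loss_le : 2 * δ * (1 + ε) ≤ dist x x' * ε := by
    rw [div_le_iff₀ hε] at hsep
    linarith
  calc
    dist x x' / (1 + ε) ≤ dist x x' - 2 * δ := by
      rw [div_le_iff₀ (by positivity)]
      linarith
    _ ≤ dist x x' - 2 * dist x p := by gcongr
    _ ≤ dist (dist x p) (dist x' p) := dist_sub_two_mul_dist_le x x' p

theorem biLipschitz_embedding_Psi_general [Fintype ι] [Fintype κ] {ε δ : ℝ} (hε : 0 < ε)
    {K : ι → Set ℝ} {φ : ι → ℝ → X}
    (hφ : ∀ i, LipschitzOnWith (Real.toNNReal (1 + ε)) (φ i) (K i))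
    (hsep : ∀ i j, i ≠ j → ∀ s ∈ K i, ∀ t ∈ K j,
      2 * (1 + ε) * δ / ε ≤ dist (φ i s) (φ j t))
    {z : κ → X} (hdense : ∀ x ∈ ⋃ i, φ i '' K i, ∃ k, dist x (z k) ≤ δ)
    {η : ι → X → ℝ} (hη : ∀ i, LipschitzWith (Real.toNNReal (1 + ε)) (η i))
    (hext : ∀ i, Set.LeftInvOn (η i) (φ i) (K i)) :
    LipschitzWith (Real.toNNReal (1 + ε)) (augmentedFrechet η z) ∧
      ∀ x ∈ ⋃ i, φ i '' K i, ∀ x' ∈ ⋃ i, φ i '' K i,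
        dist x x' / (1 + ε) ≤ dist (augmentedFrechet η z x) (augmentedFrechet η z x') := by
  refine ⟨lipschitzWith_augmentedFrechet (Real.one_le_toNNReal.2 (by linarith)) hη z,
    fun x hx x' hx' => ?_⟩
  obtain ⟨k, hk⟩ := hdense x hx
  obtain ⟨i, hxi⟩ := Set.mem_iUnion.1 hx
  obtain ⟨j, hxj⟩ := Set.mem_iUnion.1 hx'
  obtain rfl | hij := eq_or_ne i j
  · have hη_inv := dist_le_mul_dist_of_leftInvOn (hφ i) (hext i) hxi hxj
    rw [Real.coe_toNNReal _ (by positivity), ← div_le_iff₀' (by positivity)] at hη_inv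
    calc
      dist x x' / (1 + ε) ≤ dist (η i x) (η i x') := hη_inv
      _ ≤ dist (augmentedFrechet η z x) (augmentedFrechet η z x') :=
        dist_le_pi_dist (augmentedFrechet η z x) (augmentedFrechet η z x') (Sum.inl i)
  · obtain ⟨s, hs, rfl⟩ := hxi
    obtain ⟨t, ht, rfl⟩ := hxj
    calc
      dist (φ i s) (φ j t) / (1 + ε) ≤ dist (dist (φ i s) (z k)) (dist (φ j t) (z k)) :=
        dist_div_le_dist_dist_of_separated hε hk (hsep i j hij s hs t ht)
      _ ≤ dist (augmentedFrechet η z (φ i s)) (augmentedFrechet η z (φ j t)) :=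
        dist_le_pi_dist (augmentedFrechet η z (φ i s)) (augmentedFrechet η z (φ j t)) (Sum.inr k)

end AugmentedFrechet

/-- construction in Lemma 2.2: given `(1+ε')`-biLipschitz maps
`φᵢ : Kᵢ → X` on compact sets `Kᵢ ⊂ ℝ` with well-separated pairwise disjoint images,
a `δ`-dense finite set `z₁,…,z_m` in `Ω = ⋃ᵢ φᵢ(Kᵢ)` and `(1+ε')`-Lipschitz
extensions `η̄ᵢ : X → ℝ` of `φᵢ⁻¹`, the map
`Ψ(x) = (η̄₁(x),…,η̄ₙ(x), d(x,z₁),…,d(x,z_m))` into `ℓ^∞_{n+m}` is `(1+ε')`-Lipschitz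
and satisfies `‖Ψ(x)−Ψ(x')‖_∞ ≥ d(x,x')/(1+ε')` for all `x, x' ∈ Ω`. -/
theorem biLipschitz_embedding_Psi {X : Type u} [MetricSpace X]
    (ε' δ : ℝ) (hε' : 0 < ε') (hδ : 0 < δ)
    (n m : ℕ) (K : Fin n → Set ℝ) (hK : ∀ i, IsCompact (K i))
    (φ : Fin n → ℝ → X)
    (hbil : ∀ i, ∀ s ∈ K i, ∀ t ∈ K i,
      |s - t| / (1 + ε') ≤ dist (φ i s) (φ i t) ∧
        dist (φ i s) (φ i t) ≤ (1 + ε') * |s - t|)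
    (hdisj : ∀ i j, i ≠ j → Disjoint (φ i '' K i) (φ j '' K j))
    (hsep : ∀ i j, i ≠ j → ∀ s ∈ K i, ∀ t ∈ K j,
      2 * (1 + ε') * δ / ε' ≤ dist (φ i s) (φ j t))
    (z : Fin m → X) (hz : ∀ k, z k ∈ ⋃ i, φ i '' K i)
    (hdense : ∀ x ∈ ⋃ i, φ i '' K i, ∃ k, dist x (z k) ≤ δ)
    (η : Fin n → X → ℝ) (hη : ∀ i, LipschitzWith (Real.toNNReal (1 + ε')) (η i))
    (hext : ∀ i, ∀ s ∈ K i, η i (φ i s) = s) :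
    ∀ Ψ : X → (Fin n ⊕ Fin m → ℝ),
      Ψ = (fun x => Sum.elim (fun i => η i x) (fun k => dist x (z k))) →
      LipschitzWith (Real.toNNReal (1 + ε')) Ψ ∧
      ∀ x ∈ ⋃ i, φ i '' K i, ∀ x' ∈ ⋃ i, φ i '' K i,
        dist x x' / (1 + ε') ≤ dist (Ψ x) (Ψ x') := by
  rintro Ψ rfl
  exact biLipschitz_embedding_Psi_general hε'
    (fun i => LipschitzOnWith.of_dist_le' fun s hs t ht => (hbil i s hs t ht).2)
    hsep hdense hη hext

end SharpIsop
end

section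
/- There exists a universal constant C > 0 such that for every real Banach space Y and every Lipschitz loop γ:[0,1]→Y with γ(0)=γ(1), there is a singular Lipschitz disc φ: D² → Y bounding γ with Area(φ) ≤ C·length(γ)². -/
open scoped NNReal ENNReal
open MeasureTheory Filter

universe u v

namespace SharpIsop

/-!
Fill the loop by the cone with apex at its base point. In polar coordinates the cone over `c` is the
ruled surface `(r, θ) ↦ o + r • (c θ - o)`. Its metric derivative in direction `v` is at most
`‖c θ - o‖ |v₁| + r ℓ'(θ) |v₂|`, where `ℓ` is the length function of `c`. The unit ball of this
seminorm contains a rectangle of area `1 / (r ‖c θ - o‖ ℓ'(θ))`, so the Jacobian is at most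
`π r ‖c θ - o‖ ℓ'(θ) ≤ π r L ℓ'(θ)` with `L` the total length. As `ℓ` is monotone, it is
differentiable almost everywhere and its derivative integrates to at most `L`, whence the area is at
most `π L · L · ∫₀¹ r dr = π L² / 2`.
-/

open Set
open scoped Topology Real

section MetricDerivative

variable {X : Type*} [PseudoMetricSpace X] {φ ψ : ℝ × ℝ → X} {x v : ℝ × ℝ}

lemma mder_congr (h : φ =ᶠ[𝓝 x] ψ) : mder φ x = mder ψ x := by
  funext v
  have hline : Tendsto (fun r : ℝ => x + r • v) (𝓝[>] 0) (𝓝 x) := by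
    have : ContinuousAt (fun r : ℝ => x + r • v) 0 := by fun_prop
    simpa only [zero_smul, add_zero] using this.tendsto.mono_left nhdsWithin_le_nhds
  refine limsup_congr ?_
  filter_upwards [hline.eventually h] with r hr
  rw [hr, h.self_of_nhds]

lemma isCoboundedUnder_dist_div (f : ℝ → X) (y : X) :
    IsCoboundedUnder (· ≤ ·) (𝓝[>] (0 : ℝ)) fun r => dist (f r) y / r := by
  refine IsCoboundedUnder.of_frequently_ge (a := 0) (Eventually.frequently ?_)
  filter_upwards [self_mem_nhdsWithin] with r (hr : 0 < r)
  positivity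

lemma mder_le_of_tendsto {g : ℝ → ℝ} {l : ℝ} (hg : Tendsto g (𝓝[>] 0) (𝓝 l))
    (h : ∀ᶠ r in 𝓝[>] 0, dist (φ (x + r • v)) (φ x) ≤ r * g r) :
    mder φ x v ≤ l := by
  rw [← hg.limsup_eq]
  refine limsup_le_limsup ?_ (isCoboundedUnder_dist_div _ _) hg.isBoundedUnder_le
  filter_upwards [h, self_mem_nhdsWithin] with r hle (hr : 0 < r)
  rwa [div_le_iff₀' hr]

lemma mder_le_mder_of_dist_le {y w : ℝ × ℝ} {err : ℝ → ℝ} (herr : Tendsto err (𝓝[>] 0) (𝓝 0))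
    (hψ : IsBoundedUnder (· ≤ ·) (𝓝[>] (0 : ℝ)) fun r => dist (ψ (y + r • w)) (ψ y) / r)
    (h : ∀ᶠ r in 𝓝[>] 0, dist (φ (x + r • v)) (φ x) ≤ r * err r + dist (ψ (y + r • w)) (ψ y)) :
    mder φ x v ≤ mder ψ y w := by
  set quot : ℝ → ℝ := fun r => dist (ψ (y + r • w)) (ψ y) / r
  calc mder φ x v ≤ limsup (err + quot) (𝓝[>] 0) := by
        refine limsup_le_limsup ?_ (isCoboundedUnder_dist_div _ _)
          (isBoundedUnder_le_add herr.isBoundedUnder_le hψ)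
        filter_upwards [h, self_mem_nhdsWithin] with r hle (hr : 0 < r)
        rwa [div_le_iff₀' hr, Pi.add_apply, mul_add, mul_div_cancel₀ _ hr.ne']
    _ ≤ limsup err (𝓝[>] 0) + limsup quot (𝓝[>] 0) :=
        limsup_add_le herr.isBoundedUnder_ge herr.isBoundedUnder_le
          (isCoboundedUnder_dist_div _ _) hψ
    _ = mder ψ y w := by rw [herr.limsup_eq, zero_add]; rfl

lemma mder_le_mder_comp {K : ℝ≥0} (hφ : LipschitzWith K φ) {P : ℝ × ℝ → ℝ × ℝ}
    {A : ℝ × ℝ →L[ℝ] ℝ × ℝ} (hP : HasFDerivAt P A x) (v : ℝ × ℝ) :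
    mder φ (P x) (A v) ≤ mder (φ ∘ P) x v := by
  set slope : ℝ → ℝ × ℝ := fun r => r⁻¹ • (P (x + r • v) - P x) with slope_def
  have hslope : Tendsto slope (𝓝[>] 0) (𝓝 (A v)) :=
    (hP.hasLineDerivAt v).tendsto_slope_zero_right
  have herr : Tendsto (fun r => K * dist (A v) (slope r)) (𝓝[>] 0) (𝓝 0) := by
    simpa only [dist_self, mul_zero] using
      ((tendsto_const_nhds (x := A v)).dist hslope).const_mul (K : ℝ)
  refine mder_le_mder_of_dist_le herr ?_ ?_
  · refine (hslope.norm.const_mul (K : ℝ)).isBoundedUnder_le.mono_le ?_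
    filter_upwards [self_mem_nhdsWithin] with r (hr : 0 < r)
    have := hφ.dist_le_mul (P (x + r • v)) (P x)
    rw [div_le_iff₀ hr, slope_def, norm_smul, norm_inv, Real.norm_of_nonneg hr.le, ← dist_eq_norm]
    field_simp
    exact this
  · filter_upwards [self_mem_nhdsWithin] with r (hr : 0 < r)
    have hPr : P (x + r • v) = P x + r • slope r := by
      rw [slope_def, smul_inv_smul₀ hr.ne', add_sub_cancel]
    have hφr : dist (φ (P x + r • A v)) (φ (P (x + r • v))) ≤ r * (K * dist (A v) (slope r)) := by
      refine (hφ.dist_le_mul _ _).trans_eq ?_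
      rw [hPr, dist_add_left, dist_smul₀, Real.norm_of_nonneg hr.le, mul_left_comm]
    exact (dist_triangle _ _ _).trans (add_le_add_left hφr _)

end MetricDerivative

section Jacobian

variable {s : ℝ × ℝ → ℝ}

lemma jac2_nonneg (s : ℝ × ℝ → ℝ) : 0 ≤ jac2 s := by
  unfold jac2
  split_ifs <;> positivity

lemma jac2_mul_measureReal_le {U : Set (ℝ × ℝ)} (hU : ∀ v ∈ U, s v ≤ 1) :
    jac2 s * volume.real U ≤ π := by
  unfold jac2
  split_ifs with hfin
  · calc π / volume.real {v | s v ≤ 1} * volume.real U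
        ≤ π / volume.real {v | s v ≤ 1} * volume.real {v | s v ≤ 1} := by
          gcongr
          · exact hfin.ne
          · exact hU
      _ ≤ π := by
          rw [div_mul_eq_mul_div, mul_div_assoc]
          exact mul_le_of_le_one_right Real.pi_pos.le (div_self_le_one _)
  · rw [zero_mul]
    exact Real.pi_pos.le

lemma volume_real_closedBall_prod {a b : ℝ} (ha : 0 ≤ a) (hb : 0 ≤ b) :
    volume.real (Metric.closedBall (0 : ℝ) a ×ˢ Metric.closedBall (0 : ℝ) b) = 2 * a * (2 * b) := by
  rw [Measure.volume_eq_prod, measureReal_prod_prod, Real.volume_real_closedBall ha,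
    Real.volume_real_closedBall hb]

lemma abs_det_mul_jac2_le {A : ℝ × ℝ →L[ℝ] ℝ × ℝ} {a b : ℝ} (ha : 0 ≤ a) (hb : 0 ≤ b)
    (h : ∀ v, s (A v) ≤ a * |v.1| + b * |v.2|) : |A.det| * jac2 s ≤ π * (a * b) := by
  -- The perturbation by `ε` keeps the rectangle in the unit ball bounded when `a` or `b` vanishes.
  have hpos : ∀ ε > 0, |A.det| * jac2 s ≤ π * ((a + ε) * (b + ε)) := by
    intro ε hε
    set box :=
      Metric.closedBall (0 : ℝ) (2 * (a + ε))⁻¹ ×ˢ Metric.closedBall (0 : ℝ) (2 * (b + ε))⁻¹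
    have hbox : volume.real box = ((a + ε) * (b + ε))⁻¹ := by
      rw [volume_real_closedBall_prod (by positivity) (by positivity)]
      field_simp
    have himage : ∀ w ∈ A '' box, s w ≤ 1 := by
      rintro _ ⟨v, ⟨hv₁, hv₂⟩, rfl⟩
      rw [mem_closedBall_zero_iff, Real.norm_eq_abs] at hv₁ hv₂
      calc s (A v) ≤ a * |v.1| + b * |v.2| := h v
        _ ≤ (a + ε) * (2 * (a + ε))⁻¹ + (b + ε) * (2 * (b + ε))⁻¹ := by gcongr <;> linarith
        _ = 1 := by field_simp; norm_num
    have := jac2_mul_measureReal_le himage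
    rw [measureReal_def, Measure.addHaar_image_continuousLinearMap, ENNReal.toReal_mul,
      ENNReal.toReal_ofReal (abs_nonneg _), ← measureReal_def, hbox] at this
    rw [← div_le_iff₀ (by positivity)]
    calc |A.det| * jac2 s / ((a + ε) * (b + ε))
        = jac2 s * (|A.det| * ((a + ε) * (b + ε))⁻¹) := by ring
      _ ≤ π := this
  have hlim : Tendsto (fun ε => π * ((a + ε) * (b + ε))) (𝓝[>] 0)
      (𝓝 (π * (a * b))) := by
    have : Continuous fun ε => π * ((a + ε) * (b + ε)) := by fun_prop
    simpa only [add_zero] using (this.tendsto 0).mono_left nhdsWithin_le_nhds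
  exact ge_of_tendsto hlim (eventually_mem_nhdsWithin.mono hpos)

end Jacobian

section PolarArea

lemma neg_polarCoord_symm_mem_D2_iff {p : ℝ × ℝ} (hp : 0 < p.1) :
    -polarCoord.symm p ∈ D2 ↔ p.1 ≤ 1 := by
  have : (p.1 * Real.cos p.2) ^ 2 + (p.1 * Real.sin p.2) ^ 2 = p.1 ^ 2 := by
    linear_combination p.1 ^ 2 * Real.sin_sq_add_cos_sq p.2
  simp only [D2, mem_ofPred_eq, polarCoord_symm_apply, Prod.fst_neg, Prod.snd_neg, neg_sq, this]
  exact sq_le_one_iff₀ hp.le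

lemma lipArea_eq_integral_polar {X : Type*} [PseudoMetricSpace X] (φ : ℝ × ℝ → X) :
    lipArea φ = ∫ p in Ioc (0 : ℝ) 1 ×ˢ Ioo (-π) π,
      p.1 * jac2 (mder φ (-polarCoord.symm p)) := by
  have hD2 : MeasurableSet D2 := measurableSet_le (by fun_prop) (by fun_prop)
  set J : ℝ × ℝ → ℝ := D2.indicator fun x => jac2 (mder φ x) with hJ
  calc lipArea φ = ∫ x, J (-x) := by rw [lipArea, integral_neg_eq_self, integral_indicator hD2]
    _ = ∫ p in polarCoord.target, p.1 • J (-polarCoord.symm p) :=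
        (integral_comp_polarCoord_symm fun x => J (-x)).symm
    _ = ∫ p in polarCoord.target, (Iic (1 : ℝ) ×ˢ Set.univ).indicator
          (fun p : ℝ × ℝ => p.1 * jac2 (mder φ (-polarCoord.symm p))) p := by
        refine setIntegral_congr_fun polarCoord.open_target.measurableSet fun p hp => ?_
        rw [polarCoord_target] at hp
        classical
        simp only [hJ, indicator_apply, neg_polarCoord_symm_mem_D2_iff hp.1, smul_eq_mul,
          mem_prod, mem_Iic, mem_univ, and_true, mul_ite, mul_zero]
    _ = _ := by
        rw [setIntegral_indicator (measurableSet_Iic.prod MeasurableSet.univ), polarCoord_target,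
          prod_inter_prod, Ioi_inter_Iic, inter_univ]

end PolarArea

section Cone

variable {Y : Type*} [SeminormedAddCommGroup Y] [NormedSpace ℝ Y]

/-- The cone, with apex `c π`, over a loop `c : [-π, π] → Y`, as a map on the complex plane. -/
noncomputable def loopCone (c : ℝ → Y) (z : ℂ) : Y := c π + ‖z‖ • (c z.arg - c π)

lemma dist_le_of_endpoints_eq {X : Type*} [PseudoMetricSpace X] {c : ℝ → X} {K : ℝ≥0} {a b : ℝ}
    (hc : LipschitzOnWith K c (Icc a b)) (hloop : c a = c b) {s t : ℝ} (hs : s ∈ Icc a b)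
    (ht : t ∈ Icc a b) (n : ℤ) : dist (c s) (c t) ≤ K * |s - t - n * (b - a)| := by
  have hab : a ≤ b := hs.1.trans hs.2
  wlog hn : 0 ≤ n generalizing s t n
  · have := this ht hs (-n) (by lia)
    rw [dist_comm, ← abs_neg]
    convert this using 3
    push_cast
    ring
  obtain rfl | hn : n = 0 ∨ (1 : ℝ) ≤ n := by
    rcases hn.eq_or_lt with rfl | hn
    · exact .inl rfl
    · exact .inr (by exact_mod_cast hn)
  · simpa [Real.dist_eq] using hc.dist_le_mul s hs t ht
  have hsb := hc.dist_le_mul s hs b (right_mem_Icc.2 hab)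
  have hat := hc.dist_le_mul a (left_mem_Icc.2 hab) t ht
  rw [Real.dist_eq, abs_sub_comm, abs_of_nonneg (sub_nonneg.2 hs.2)] at hsb
  rw [Real.dist_eq, abs_sub_comm, abs_of_nonneg (sub_nonneg.2 ht.1)] at hat
  calc dist (c s) (c t) ≤ dist (c s) (c b) + dist (c a) (c t) := by
        rw [hloop]
        exact dist_triangle _ _ _
    _ ≤ K * (b - s) + K * (t - a) := add_le_add hsb hat
    _ = K * (1 * (b - a) - (s - t)) := by ring
    _ ≤ K * |s - t - n * (b - a)| := by
        rw [abs_sub_comm]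
        gcongr
        refine le_trans ?_ (le_abs_self _)
        gcongr

lemma norm_mul_angle_le {z w : ℂ} (hz : z ≠ 0) (hw : w ≠ 0) :
    ‖z‖ * InnerProductGeometry.angle z w ≤ π * ‖z - w‖ := by
  set u := NormedSpace.normalize z
  set v := NormedSpace.normalize w
  have hangle : InnerProductGeometry.angle z w = InnerProductGeometry.angle u v := by simp [u, v]
  have hchord : ‖z‖ * ‖u - v‖ ≤ 2 * ‖z - w‖ := by
    have hsplit : ‖z‖ • (u - v) = (z - w) + (‖w‖ - ‖z‖) • v := by
      simp only [u, v, smul_sub, sub_smul, NormedSpace.norm_smul_normalize]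
      abel
    calc ‖z‖ * ‖u - v‖ = ‖(z - w) + (‖w‖ - ‖z‖) • v‖ := by
          rw [← hsplit, norm_smul, norm_norm]
      _ ≤ ‖z - w‖ + |‖w‖ - ‖z‖| * ‖v‖ := norm_add_le_of_le le_rfl (norm_smul _ _).le
      _ ≤ ‖z - w‖ + ‖z - w‖ * 1 := by
          gcongr
          · rw [norm_sub_rev]
            exact abs_norm_sub_norm_le w z
          · exact (NormedSpace.norm_normalize hw).le
      _ = 2 * ‖z - w‖ := by ring
  calc ‖z‖ * InnerProductGeometry.angle z w ≤ ‖z‖ * (π / 2 * ‖u - v‖) := by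
        rw [hangle]
        gcongr
        exact Complex.angle_le_mul_norm_sub (NormedSpace.norm_normalize hz)
          (NormedSpace.norm_normalize hw)
    _ = π / 2 * (‖z‖ * ‖u - v‖) := by ring
    _ ≤ π / 2 * (2 * ‖z - w‖) := by gcongr
    _ = π * ‖z - w‖ := by ring

lemma exists_angle_eq_abs_arg_sub {z w : ℂ} (hz : z ≠ 0) (hw : w ≠ 0) :
    ∃ n : ℤ, InnerProductGeometry.angle z w = |z.arg - w.arg - n * (2 * π)| := by
  have hpolar : ∀ u : ℂ, u = ‖u‖ • Complex.exp (u.arg * Complex.I) := fun u => by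
    rw [Complex.real_smul, Complex.norm_mul_exp_arg_mul_I]
  refine ⟨toIocDiv Real.two_pi_pos (-π) (z.arg - w.arg), ?_⟩
  conv_lhs => rw [hpolar z, hpolar w]
  rw [InnerProductGeometry.angle_smul_left_of_pos _ _ (norm_pos_iff.2 hz),
    InnerProductGeometry.angle_smul_right_of_pos _ _ (norm_pos_iff.2 hw), Complex.angle_exp_exp,
    toIocMod, zsmul_eq_mul]

lemma norm_mul_dist_arg_le {X : Type*} [PseudoMetricSpace X] {c : ℝ → X} {K : ℝ≥0}
    (hc : LipschitzOnWith K c (Icc (-π) π)) (hloop : c (-π) = c π) (z w : ℂ) :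
    ‖z‖ * dist (c z.arg) (c w.arg) ≤ K * π * dist z w := by
  have hdist := dist_le_of_endpoints_eq hc hloop
    (Ioc_subset_Icc_self z.arg_mem_Ioc) (Ioc_subset_Icc_self w.arg_mem_Ioc)
  rcases eq_or_ne z 0 with rfl | hz
  · rw [norm_zero, zero_mul]
    positivity
  rcases eq_or_ne w 0 with rfl | hw
  · calc ‖z‖ * dist (c z.arg) (c (Complex.arg 0)) ≤ ‖z‖ * (K * π) := by
          gcongr
          refine (hdist 0).trans (mul_le_mul_of_nonneg_left ?_ K.2)
          simpa using Complex.abs_arg_le_pi z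
      _ = K * π * dist z 0 := by rw [dist_zero_right, mul_comm]
  obtain ⟨n, hn⟩ := exists_angle_eq_abs_arg_sub hz hw
  calc ‖z‖ * dist (c z.arg) (c w.arg) ≤ ‖z‖ * (K * InnerProductGeometry.angle z w) := by
        gcongr
        rw [hn, two_mul, ← sub_neg_eq_add]
        exact hdist n
    _ = K * (‖z‖ * InnerProductGeometry.angle z w) := by ring
    _ ≤ K * (π * ‖z - w‖) := mul_le_mul_of_nonneg_left (norm_mul_angle_le hz hw) K.2
    _ = K * π * dist z w := by rw [dist_eq_norm, mul_assoc]

lemma lipschitzWith_loopCone {c : ℝ → Y} {K : ℝ≥0} (hc : LipschitzOnWith K c (Icc (-π) π))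
    (hloop : c (-π) = c π) : LipschitzWith (K * (3 * NNReal.pi)) (loopCone c) := by
  have hapex : ∀ z : ℂ, ‖c z.arg - c π‖ ≤ K * (2 * π) := fun z => by
    have hz := z.arg_mem_Ioc
    have := hc.dist_le_mul _ (Ioc_subset_Icc_self hz) π ⟨by linarith [Real.pi_pos], le_rfl⟩
    rw [dist_eq_norm, Real.dist_eq, abs_sub_comm, abs_of_nonneg (sub_nonneg.2 hz.2)] at this
    exact this.trans (by gcongr; linarith [hz.1])
  refine LipschitzWith.of_dist_le_mul fun z w => ?_
  calc dist (loopCone c z) (loopCone c w)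
      = ‖‖z‖ • (c z.arg - c w.arg) + (‖z‖ - ‖w‖) • (c w.arg - c π)‖ := by
        rw [dist_eq_norm, loopCone, loopCone, add_sub_add_left_eq_sub]
        congr 1
        module
    _ ≤ ‖z‖ * dist (c z.arg) (c w.arg) + |‖z‖ - ‖w‖| * ‖c w.arg - c π‖ := by
        refine norm_add_le_of_le ?_ (norm_smul_le _ _)
        rw [norm_smul, norm_norm, dist_eq_norm]
    _ ≤ K * π * dist z w + dist z w * (K * (2 * π)) := by
        refine add_le_add (norm_mul_dist_arg_le hc hloop z w) ?_
        gcongr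
        · exact (abs_norm_sub_norm_le z w).trans_eq (dist_eq_norm z w).symm
        · exact hapex w
    _ = ↑(K * (3 * NNReal.pi)) * dist z w := by
        push_cast
        rw [NNReal.coe_real_pi]
        ring

end Cone

section Variation

variable {a b : ℝ}

lemma exists_monotoneOn_dist_le_abs_sub {X : Type*} [PseudoMetricSpace X] {c : ℝ → X} (hab : a ≤ b)
    (hc : BoundedVariationOn c (Icc a b)) :
    ∃ V : ℝ → ℝ, MonotoneOn V (Icc a b) ∧ V b - V a = (eVariationOn c (Icc a b)).toReal ∧
      ∀ s ∈ Icc a b, ∀ t ∈ Icc a b, dist (c s) (c t) ≤ |V s - V t| := by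
  have ha : a ∈ Icc a b := left_mem_Icc.2 hab
  refine ⟨variationOnFromTo c (Icc a b) a,
    variationOnFromTo.monotoneOn hc.locallyBoundedVariationOn ha, ?_, fun s hs t ht => ?_⟩
  · rw [variationOnFromTo.self, sub_zero, variationOnFromTo.eq_of_le _ _ hab, inter_self]
  wlog hts : t ≤ s generalizing s t
  · rw [dist_comm, abs_sub_comm]
    exact this t ht s hs (le_of_not_ge hts)
  rw [variationOnFromTo.sub_right hc.locallyBoundedVariationOn ha hs ht,
    variationOnFromTo.eq_of_le _ _ hts, abs_of_nonneg ENNReal.toReal_nonneg, dist_edist]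
  exact ENNReal.toReal_mono (hc.mono inter_subset_left)
    (eVariationOn.edist_le _ ⟨hs, right_mem_Icc.2 hts⟩ ⟨ht, left_mem_Icc.2 hts⟩)

variable {V : ℝ → ℝ}

lemma ae_hasDerivAt_of_monotoneOn (hV : MonotoneOn V (Icc a b)) :
    ∀ᵐ t, t ∈ Ioo a b → HasDerivAt V (deriv V t) t := by
  filter_upwards [hV.ae_differentiableWithinAt_of_mem] with t hdiff ht
  exact ((hdiff (Ioo_subset_Icc_self ht)).differentiableAt
    (Icc_mem_nhds ht.1 ht.2)).hasDerivAt

lemma integrableOn_deriv_of_monotoneOn (hab : a ≤ b) (hV : MonotoneOn V (Icc a b)) :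
    IntegrableOn (deriv V) (Ioo a b) := by
  rw [← uIcc_of_le hab] at hV
  exact hV.intervalIntegrable_deriv.1.mono_set Ioo_subset_Ioc_self

lemma setIntegral_abs_deriv_le_of_monotoneOn (hab : a ≤ b) (hV : MonotoneOn V (Icc a b)) :
    ∫ t in Ioo a b, |deriv V t| ≤ V b - V a := by
  have hderiv : EqOn (fun t => |deriv V t|) (deriv V) (Ioo a b) := fun t ht => by
    refine abs_of_nonneg ?_
    rw [← derivWithin_of_mem_nhds (Icc_mem_nhds ht.1 ht.2)]
    exact hV.derivWithin_nonneg
  have hVab : V a ≤ V b := hV (left_mem_Icc.2 hab) (right_mem_Icc.2 hab) hab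
  rw [setIntegral_congr_fun measurableSet_Ioo hderiv, ← integral_Ioc_eq_integral_Ioo,
    ← intervalIntegral.integral_of_le hab]
  have := MonotoneOn.intervalIntegral_deriv_mem_uIcc ((uIcc_of_le hab).symm ▸ hV)
  rw [uIcc_of_le (sub_nonneg.2 hVab)] at this
  exact this.2

end Variation

section RuledSurface

variable {Y : Type*} [SeminormedAddCommGroup Y] [NormedSpace ℝ Y]

lemma mder_ruled_le {c : ℝ → Y} {V : ℝ → ℝ} {V' θ : ℝ} (hV : HasDerivAt V V' θ)
    (hcV : ∀ᶠ t in 𝓝 θ, dist (c t) (c θ) ≤ |V t - V θ|) (o : Y) (r : ℝ) (v : ℝ × ℝ) :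
    mder (fun p : ℝ × ℝ => o + p.1 • (c p.2 - o)) (r, θ) v
      ≤ dist (c θ) o * |v.1| + |r| * |V'| * |v.2| := by
  have hline : ∀ x y : ℝ, Tendsto (fun t : ℝ => x + t * y) (𝓝[>] 0) (𝓝 x) := fun x y => by
    have : Continuous fun t : ℝ => x + t * y := by fun_prop
    simpa only [zero_mul, add_zero] using (this.tendsto 0).mono_left nhdsWithin_le_nhds
  have hslope : Tendsto (fun t : ℝ => t⁻¹ * (V (θ + t * v.2) - V θ)) (𝓝[>] 0) (𝓝 (v.2 * V')) := by
    simpa using (hV.hasFDerivAt.hasLineDerivAt v.2).tendsto_slope_zero_right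
  have hlim : Tendsto
      (fun t : ℝ => dist (c θ) o * |v.1| + |r + t * v.1| * |t⁻¹ * (V (θ + t * v.2) - V θ)|)
      (𝓝[>] 0) (𝓝 (dist (c θ) o * |v.1| + |r| * |V'| * |v.2|)) := by
    convert tendsto_const_nhds.add ((hline r v.1).abs.mul hslope.abs) using 2
    rw [abs_mul]
    ring_nf
  refine mder_le_of_tendsto hlim ?_
  filter_upwards [(hline θ v.2).eventually hcV, self_mem_nhdsWithin] with t hct (ht : 0 < t)
  have hsplit : (r + t * v.1) • (c (θ + t * v.2) - o) - r • (c θ - o) =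
      (t * v.1) • (c θ - o) + (r + t * v.1) • (c (θ + t * v.2) - c θ) := by
    module
  simp only [Prod.fst_add, Prod.snd_add, Prod.smul_fst, Prod.smul_snd, smul_eq_mul, dist_add_left]
  calc dist ((r + t * v.1) • (c (θ + t * v.2) - o)) (r • (c θ - o))
      ≤ t * |v.1| * dist (c θ) o + |r + t * v.1| * dist (c (θ + t * v.2)) (c θ) := by
        rw [dist_eq_norm, hsplit]
        refine norm_add_le_of_le ?_ ?_ <;>
          rw [norm_smul, dist_eq_norm, Real.norm_eq_abs]
        rw [abs_mul, abs_of_pos ht]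
    _ ≤ t * |v.1| * dist (c θ) o + |r + t * v.1| * |V (θ + t * v.2) - V θ| := by gcongr
    _ = t * (dist (c θ) o * |v.1| + |r + t * v.1| * |t⁻¹ * (V (θ + t * v.2) - V θ)|) := by
        rw [abs_mul, abs_of_pos (inv_pos.2 ht)]
        field_simp

end RuledSurface

section ConeFilling

variable {Y : Type*} [SeminormedAddCommGroup Y] [NormedSpace ℝ Y] {c : ℝ → Y} {K : ℝ≥0}

/-- The cone over `c` as a map of the real plane. The point reflection moves the branch cut of the
argument to the positive half-axis, where a loop parametrized by `[0, 2π]` has its base point. -/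
noncomputable def coneFilling (c : ℝ → Y) (p : ℝ × ℝ) : Y :=
  loopCone c (-Complex.equivRealProdCLM.symm p)

lemma exists_lipschitzWith_coneFilling (hc : LipschitzOnWith K c (Icc (-π) π))
    (hloop : c (-π) = c π) : ∃ K', LipschitzWith K' (coneFilling c) :=
  ⟨_, ((lipschitzWith_loopCone hc hloop).comp LipschitzWith.id.neg).comp
    (Complex.equivRealProdCLM.symm : ℝ × ℝ →L[ℝ] ℂ).lipschitz⟩

lemma coneFilling_neg_polarCoord_symm {p : ℝ × ℝ} (hr : 0 < p.1) (hθ : p.2 ∈ Ioc (-π) π) :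
    coneFilling c (-polarCoord.symm p) = c π + p.1 • (c p.2 - c π) := by
  have hpolar :
      -Complex.equivRealProdCLM.symm (-polarCoord.symm p) = Complex.polarCoord.symm p := by
    rw [map_neg, neg_neg]
    rfl
  rw [coneFilling, hpolar, loopCone, Complex.norm_polarCoord_symm, abs_of_pos hr,
    Complex.polarCoord_symm_apply, Complex.ofReal_cos, Complex.ofReal_sin,
    Complex.arg_mul_cos_add_sin_mul_I hr hθ]

lemma mul_jac2_mder_coneFilling_le (hφ : LipschitzWith K (coneFilling c)) {V : ℝ → ℝ} {V' : ℝ}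
    {p : ℝ × ℝ} (hp : p ∈ polarCoord.target) (hV : HasDerivAt V V' p.2)
    (hcV : ∀ᶠ t in 𝓝 p.2, dist (c t) (c p.2) ≤ |V t - V p.2|) :
    p.1 * jac2 (mder (coneFilling c) (-polarCoord.symm p))
      ≤ π * (dist (c p.2) (c π) * (p.1 * |V'|)) := by
  have hr : 0 < p.1 := by simpa using hp.1
  have hdet : |(-fderivPolarCoordSymm p).det| = p.1 := by
    rw [ContinuousLinearMap.det, ContinuousLinearMap.toLinearMap_neg, ← neg_one_smul ℝ,
      LinearMap.det_smul, Module.finrank_prod, Module.finrank_self, neg_one_sq, one_mul,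
      ← ContinuousLinearMap.det, det_fderivPolarCoordSymm, abs_of_pos hr]
  have hruled : coneFilling c ∘ (fun q => -polarCoord.symm q) =ᶠ[𝓝 p]
      fun q => c π + q.1 • (c q.2 - c π) :=
    (polarCoord.open_target.eventually_mem hp).mono fun _ hq =>
      coneFilling_neg_polarCoord_symm hq.1 (Ioo_subset_Ioc_self hq.2)
  have hmder : ∀ v, mder (coneFilling c) (-polarCoord.symm p) ((-fderivPolarCoordSymm p) v)
      ≤ dist (c p.2) (c π) * |v.1| + p.1 * |V'| * |v.2| := fun v =>
    calc mder (coneFilling c) (-polarCoord.symm p) ((-fderivPolarCoordSymm p) v)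
        ≤ mder (coneFilling c ∘ fun q => -polarCoord.symm q) p v :=
          mder_le_mder_comp hφ (hasFDerivAt_polarCoord_symm p).neg v
      _ ≤ dist (c p.2) (c π) * |v.1| + p.1 * |V'| * |v.2| := by
          rw [mder_congr hruled, ← abs_of_pos hr]
          exact mder_ruled_le hV hcV _ _ _
  have := abs_det_mul_jac2_le dist_nonneg (by positivity) hmder
  rwa [hdet] at this

end ConeFilling

section Area

variable {Y : Type*} [SeminormedAddCommGroup Y] [NormedSpace ℝ Y] {c : ℝ → Y} {K : ℝ≥0}
  {V : ℝ → ℝ}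

lemma ae_mul_jac2_mder_coneFilling_le
    (hφ : LipschitzWith K (coneFilling c)) (hV : MonotoneOn V (Icc (-π) π))
    (hcV : ∀ s ∈ Icc (-π) π, ∀ t ∈ Icc (-π) π, dist (c s) (c t) ≤ |V s - V t|) :
    ∀ᵐ p ∂volume.restrict polarCoord.target,
      p.1 * jac2 (mder (coneFilling c) (-polarCoord.symm p))
        ≤ π * (dist (c p.2) (c π) * (p.1 * |deriv V p.2|)) := by
  have hderiv : ∀ᵐ p : ℝ × ℝ, p.2 ∈ Ioo (-π) π → HasDerivAt V (deriv V p.2) p.2 :=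
    Measure.quasiMeasurePreserving_snd.ae (ae_hasDerivAt_of_monotoneOn hV)
  filter_upwards [ae_restrict_of_ae hderiv,
    ae_restrict_mem polarCoord.open_target.measurableSet] with p hp hp_mem
  have hθ : p.2 ∈ Ioo (-π) π := hp_mem.2
  refine mul_jac2_mder_coneFilling_le hφ hp_mem (hp hθ) ?_
  filter_upwards [Ioo_mem_nhds hθ.1 hθ.2] with t ht
  exact hcV t (Ioo_subset_Icc_self ht) _ (Ioo_subset_Icc_self hθ)

lemma lipArea_coneFilling_le_of_monotoneOn
    (hφ : LipschitzWith K (coneFilling c)) (hV : MonotoneOn V (Icc (-π) π))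
    (hcV : ∀ s ∈ Icc (-π) π, ∀ t ∈ Icc (-π) π, dist (c s) (c t) ≤ |V s - V t|) :
    lipArea (coneFilling c) ≤ π / 2 * (V π - V (-π)) ^ 2 := by
  have hπ : -π ≤ π := by linarith [Real.pi_pos]
  have hright : π ∈ Icc (-π) π := right_mem_Icc.2 hπ
  set L := V π - V (-π)
  have hL : 0 ≤ L := sub_nonneg.2 (hV (left_mem_Icc.2 hπ) hright hπ)
  have hdist : ∀ t ∈ Icc (-π) π, dist (c t) (c π) ≤ L := fun t ht =>
    (hcV t ht π hright).trans
      (Real.dist_le_of_mem_Icc (hV.mapsTo_Icc ht) (hV.mapsTo_Icc hright))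
  set S : Set (ℝ × ℝ) := Ioc 0 1 ×ˢ Ioo (-π) π
  have hS : MeasurableSet S := measurableSet_Ioc.prod measurableSet_Ioo
  have hS_target : S ⊆ polarCoord.target := prod_mono Ioc_subset_Ioi_self subset_rfl
  have hint : IntegrableOn (fun p : ℝ × ℝ => p.1 * |deriv V p.2|) S := by
    rw [IntegrableOn, Measure.volume_eq_prod, ← Measure.prod_restrict]
    exact Integrable.mul_prod (f := fun r : ℝ => r) continuous_id.integrableOn_Ioc
      (integrableOn_deriv_of_monotoneOn hπ hV).abs
  calc lipArea (coneFilling c)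
      ≤ ∫ p in S, π * L * (p.1 * |deriv V p.2|) := by
        rw [lipArea_eq_integral_polar]
        refine integral_mono_of_nonneg ?_ (hint.const_mul _) ?_
        · filter_upwards [ae_restrict_mem hS] with p hp
          exact mul_nonneg hp.1.1.le (jac2_nonneg _)
        filter_upwards [ae_restrict_mem hS, ae_restrict_of_ae_restrict_of_subset hS_target
          (ae_mul_jac2_mder_coneFilling_le hφ hV hcV)] with p ⟨hr, hθ⟩ hp
        have hdist_p := hdist _ (Ioo_subset_Icc_self hθ)
        have hr_pos := hr.1
        refine hp.trans ?_
        rw [mul_assoc]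
        gcongr
    _ = π * L * (1 / 2 * ∫ t in Ioo (-π) π, |deriv V t|) := by
        rw [integral_const_mul, Measure.volume_eq_prod,
          setIntegral_prod_mul (fun r : ℝ => r) fun t => |deriv V t|,
          ← intervalIntegral.integral_of_le zero_le_one, integral_id]
        norm_num
    _ ≤ π * L * (1 / 2 * L) := by
        gcongr
        exact setIntegral_abs_deriv_le_of_monotoneOn hπ hV
    _ = π / 2 * L ^ 2 := by ring

lemma lipArea_coneFilling_le (hφ : LipschitzWith K (coneFilling c))
    (hc : BoundedVariationOn c (Icc (-π) π)) :
    lipArea (coneFilling c) ≤ π / 2 * (eVariationOn c (Icc (-π) π)).toReal ^ 2 := by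
  obtain ⟨V, hV, hV_length, hcV⟩ :=
    exists_monotoneOn_dist_le_abs_sub (by linarith [Real.pi_pos]) hc
  rw [← hV_length]
  exact lipArea_coneFilling_le_of_monotoneOn hφ hV hcV

end Area

section Boundary

/-- The curve `γ : [0, 1] → X` reparametrized by `[-π, π]`, so that it can be composed with the
argument of a complex number. -/
noncomputable def angularReparam {X : Type*} (γ : ℝ → X) (θ : ℝ) : X := γ ((θ + π) / (2 * π))

lemma angularReparam_two_pi_mul_sub_pi {X : Type*} (γ : ℝ → X) (s : ℝ) :
    angularReparam γ (2 * π * s - π) = γ s := by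
  rw [angularReparam, sub_add_cancel, mul_div_cancel_left₀ s Real.two_pi_pos.ne']

lemma angularReparam_neg_pi {X : Type*} (γ : ℝ → X) : angularReparam γ (-π) = γ 0 := by
  simpa using angularReparam_two_pi_mul_sub_pi γ 0

lemma angularReparam_pi {X : Type*} (γ : ℝ → X) : angularReparam γ π = γ 1 := by
  have := angularReparam_two_pi_mul_sub_pi γ 1
  rwa [show 2 * π * 1 - π = π by ring] at this

lemma image_angle_rescaling : (fun θ : ℝ => (θ + π) / (2 * π)) '' Icc (-π) π = Icc 0 1 := by
  rw [← image_image (· / (2 * π)) (· + π), image_add_const_Icc]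
  simp only [div_eq_mul_inv]
  rw [image_mul_right_Icc (by linarith [Real.pi_pos]) (by positivity)]
  congr 1 <;> field_simp <;> ring

lemma eVariationOn_angularReparam {X : Type*} [PseudoEMetricSpace X] (γ : ℝ → X) :
    eVariationOn (angularReparam γ) (Icc (-π) π) = eVariationOn γ (Icc 0 1) := by
  rw [← image_angle_rescaling]
  refine eVariationOn.comp_eq_of_monotoneOn γ _ (Monotone.monotoneOn (fun s t hst => ?_) _)
  gcongr

lemma exists_lipschitzOnWith_angularReparam {X : Type*} [PseudoEMetricSpace X] {γ : ℝ → X}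
    {K : ℝ≥0} (hγ : LipschitzOnWith K γ (Icc 0 1)) :
    ∃ K', LipschitzOnWith K' (angularReparam γ) (Icc (-π) π) := by
  have hlip : LipschitzWith ‖(2 * π)⁻¹‖₊ fun θ : ℝ => (θ + π) / (2 * π) :=
    LipschitzWith.of_dist_le_mul fun s t => by
      simp only [div_eq_inv_mul, ← smul_eq_mul, dist_smul₀, dist_add_right, coe_nnnorm, le_refl]
  exact ⟨_, hγ.comp hlip.lipschitzOnWith (mapsTo_iff_image_subset.2 image_angle_rescaling.subset)⟩

variable {Y : Type*} [SeminormedAddCommGroup Y] [NormedSpace ℝ Y] {γ : ℝ → Y}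

lemma coneFilling_angularReparam_cos_sin (hloop : γ 0 = γ 1) {s : ℝ} (hs : s ∈ Icc (0 : ℝ) 1) :
    coneFilling (angularReparam γ) (Real.cos (2 * π * s), Real.sin (2 * π * s)) = γ s := by
  wlog hpos : 0 < s generalizing s
  · obtain rfl : s = 0 := le_antisymm (not_lt.1 hpos) hs.1
    simpa [hloop] using this (right_mem_Icc.2 zero_le_one) one_pos
  have hmem : 2 * π * s - π ∈ Ioc (-π) π :=
    ⟨by linarith [mul_pos Real.two_pi_pos hpos],
      by linarith [mul_le_mul_of_nonneg_left hs.2 Real.two_pi_pos.le]⟩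
  have hpoint : (Real.cos (2 * π * s), Real.sin (2 * π * s)) =
      -polarCoord.symm (1, 2 * π * s - π) := by
    simp [Real.cos_sub_pi, Real.sin_sub_pi]
  rw [hpoint, coneFilling_neg_polarCoord_symm one_pos hmem, one_smul, add_sub_cancel,
    angularReparam_two_pi_mul_sub_pi]

end Boundary

theorem banach_quadratic_isoperimetric_general {Y : Type*} [SeminormedAddCommGroup Y]
    [NormedSpace ℝ Y] {γ : ℝ → Y} (hγ : IsLipLoop γ) :
    ∃ φ : ℝ × ℝ → Y, BoundsLoop φ γ ∧ lipArea φ ≤ π / 2 * loopLength γ ^ 2 := by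
  obtain ⟨⟨K, hK⟩, hloop⟩ := hγ
  obtain ⟨K', hK'⟩ := exists_lipschitzOnWith_angularReparam hK
  have hloop' : angularReparam γ (-π) = angularReparam γ π := by
    rw [angularReparam_neg_pi, angularReparam_pi, hloop]
  have hbdd : BoundedVariationOn (angularReparam γ) (Icc (-π) π) := by
    have hπ : -π ≤ π := by linarith [Real.pi_pos]
    simpa only [inter_self] using
      hK'.locallyBoundedVariationOn (-π) π (left_mem_Icc.2 hπ) (right_mem_Icc.2 hπ)
  obtain ⟨C, hC⟩ := exists_lipschitzWith_coneFilling hK' hloop'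
  refine ⟨coneFilling (angularReparam γ), ⟨⟨C, hC.lipschitzOnWith⟩, fun s hs =>
    coneFilling_angularReparam_cos_sin hloop hs⟩, ?_⟩
  rw [loopLength, ← eVariationOn_angularReparam]
  exact lipArea_coneFilling_le hC hbdd

/-- there is a universal constant `C > 0` such that in every real
Banach space `Y`, every Lipschitz loop `γ` bounds a singular Lipschitz disc of area
at most `C·length(γ)²` (e.g. via the cone construction). -/
theorem banach_quadratic_isoperimetric :
    ∃ C > (0:ℝ), ∀ (Y : Type) [NormedAddCommGroup Y] [NormedSpace ℝ Y]
      [CompleteSpace Y], ∀ γ : ℝ → Y, IsLipLoop γ →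
      ∃ φ : ℝ × ℝ → Y, BoundsLoop φ γ ∧ lipArea φ ≤ C * (loopLength γ) ^ 2 :=
  ⟨π / 2, by positivity, fun _ _ _ _ _ hγ => banach_quadratic_isoperimetric_general hγ⟩

end SharpIsop
end
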